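/- Asymptotically almost surely, the number of subtrees of a uniformly random labelled tree on n vertices is at most 1.41960^n; that is, the probability that c(𝒯_n) ≤ 1.41960^n tends to 1 as n → ∞. -/

import Mathlib

/-!
Root a labelled tree and orient every edge towards the root. A subtree is determined by its top
vertex together with the set of all ancestors of its vertices, so the number of subtrees is at most
`n * Q`, where `Q` counts the closed sets: the vertex sets that contain the parent of each of their
elements. By Markov's inequality it suffices to bound the moment `∑ Q ^ s` over all rooted forests
on `n` vertices for one suitable small `s > 0`.

The number `Q` is multiplicative over the trees of a forest, and a rooted tree has `1 + Q` closed
sets when the forest obtained by deleting its root has `Q`. For `q ≤ 250` let `ν_q` be the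
exponential generating function of the forests with `Q = q`; as a Dirichlet series in `q` these
satisfy `ν = exp (x ∑ ν_q (1 + q) ^ (-z))`. Applying the derivation that multiplies the `q`-th
coefficient by the number of prime factors of `q` to both sides gives a recursion for `ν_q`, hence
certified numerical upper bounds for `ν_q (1 / e)`.

Put `h = 252 / 251`. Since `1 + Q ≤ h * Q` for `Q > 250`,
`(1 + Q) ^ s ≤ h ^ s * Q ^ s + ∑_{q ≤ 250} ((1 + q) ^ s - h ^ s * q ^ s) [Q = q]`,
so the moments are dominated by the coefficients of the solution `β` of
`β = exp (x (h ^ s β + ∑ ((1 + q) ^ s - h ^ s q ^ s) ν_q))`.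
At `x = exp (-1 - 0.3502 s)` the partial sums of `β` stay below `e` as soon as a certain inequality
between functions of `s` holds. It is an equality at `s = 0`, and the numerical bounds show that the
derivatives there compare strictly, so it holds for some `s > 0`.

Together with Stirling's upper bound for `n!` and the lower bound `n ^ (n - 2)` for the number of
labelled trees, the proportion of trees with more than `1.4196 ^ n` subtrees is at most a polynomial
in `n` times `(exp 0.3502 / 1.4196) ^ (s n)`, and `exp 0.3502 < 1.4196`.
-/

open Filter Topology

/-- The number of subtrees of a graph `G` on `Fin n`: the number of (nonempty) vertex
subsets inducing a connected subgraph. -/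
noncomputable def subtreeCount {n : ℕ} (G : SimpleGraph (Fin n)) : ℕ :=
  Nat.card {S : Set (Fin n) // (G.induce S).Connected}

/-- The probability that a uniformly random labelled tree on `n` vertices satisfies `p`. -/
noncomputable def treeProb (n : ℕ) (p : SimpleGraph (Fin n) → Prop) : ℝ :=
  (Nat.card {G : SimpleGraph (Fin n) // G.IsTree ∧ p G} : ℝ) /
    (Nat.card {G : SimpleGraph (Fin n) // G.IsTree} : ℝ)

open scoped Nat

/-! ### Rooted forests and their closed sets -/

section Forests

open Finset Relation

variable {V : Type*}

/-- A partial parent function is a rooted forest when some rank strictly decreases from each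
vertex to its parent; the roots are the vertices without a parent. -/
def IsForest (p : V → Option V) : Prop :=
  ∃ rank : V → ℕ, ∀ v w, p v = some w → rank w < rank v

/-- The vertex `v` is `r` itself or a descendant of `r`. -/
def DescendsFrom (p : V → Option V) : V → V → Prop :=
  ReflTransGen fun v w => p v = some w

lemma IsForest.mono {p q : V → Option V} (hq : IsForest q)
    (h : ∀ v w, p v = some w → q v = some w) : IsForest p :=
  hq.imp fun _ hrank v w hvw => hrank v w (h v w hvw)

lemma DescendsFrom.mono {p q : V → Option V} (h : ∀ v w, p v = some w → q v = some w) {v r : V}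
    (hvr : DescendsFrom p v r) : DescendsFrom q v r :=
  ReflTransGen.mono h _ _ hvr

lemma DescendsFrom.mem {p : V → Option V} {D : Finset V} (hD : ∀ v w, v ∈ D → p v = some w → w ∈ D)
    {v r : V} (hvr : DescendsFrom p v r) (hv : v ∈ D) : r ∈ D := by
  induction hvr with
  | refl => exact hv
  | tail _ hparent ih => exact hD _ _ ih hparent

lemma DescendsFrom.antisymm {p : V → Option V} (hp : IsForest p) {v w : V}
    (hvw : DescendsFrom p v w) (hwv : DescendsFrom p w v) : v = w := by
  obtain ⟨rank, hrank⟩ := hp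
  have rank_le : ∀ {a b}, DescendsFrom p a b → rank b ≤ rank a := fun h => by
    induction h with
    | refl => exact le_rfl
    | tail _ hparent ih => exact (hrank _ _ hparent).le.trans ih
  rcases ReflTransGen.cases_head hvw with h | ⟨u, hvu, huw⟩
  · exact h
  · exact absurd ((rank_le hwv).trans (rank_le huw)) (hrank v u hvu).not_ge

lemma DescendsFrom.of_parent {p : V → Option V} {v w r : V} (hvr : DescendsFrom p v r)
    (hvw : p v = some w) (hne : v ≠ r) : DescendsFrom p w r := by
  rcases ReflTransGen.cases_head hvr with h | ⟨u, hvu, hur⟩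
  · exact absurd h hne
  · rwa [Option.some.inj (hvw.symm.trans hvu)]

lemma IsForest.exists_root {p : V → Option V} (hp : IsForest p) (v : V) :
    ∃ r, DescendsFrom p v r ∧ p r = none := by
  obtain ⟨rank, hrank⟩ := hp
  induction h : rank v using Nat.strong_induction_on generalizing v with
  | _ k ih =>
    cases hv : p v with
    | none => exact ⟨v, ReflTransGen.refl, hv⟩
    | some w =>
      obtain ⟨r, hwr, hr⟩ := ih (rank w) (h ▸ hrank v w hv) w rfl
      exact ⟨r, ReflTransGen.head hv hwr, hr⟩

open scoped Classical in
/-- The closed sets of a forest on `S`: the subsets of `S` that contain the parent of each of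
their elements. -/
noncomputable def closedSets (p : V → Option V) (S : Finset V) : Finset (Finset V) :=
  {D ∈ S.powerset | ∀ v w, v ∈ D → p v = some w → w ∈ D}

open scoped Classical in
/-- The vertices of `S` in the same tree as `m`. -/
noncomputable def component (p : V → Option V) (S : Finset V) (m : V) : Finset V :=
  {v ∈ S | ∃ r, DescendsFrom p v r ∧ DescendsFrom p m r}

lemma mem_closedSets {S D : Finset V} {p : V → Option V} :
    D ∈ closedSets p S ↔ D ⊆ S ∧ ∀ v w, v ∈ D → p v = some w → w ∈ D := by
  simp [closedSets]

lemma card_closedSets_pos (p : V → Option V) (S : Finset V) : 0 < #(closedSets p S) :=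
  card_pos.2 ⟨∅, by simp [mem_closedSets]⟩

@[simp]
lemma card_closedSets_empty (p : V → Option V) : #(closedSets p ∅) = 1 := by
  refine card_eq_one.2 ⟨∅, ?_⟩
  ext D
  simp +contextual [mem_closedSets, subset_empty]

lemma mem_component {p : V → Option V} {S : Finset V} {m v : V} :
    v ∈ component p S m ↔ v ∈ S ∧ ∃ r, DescendsFrom p v r ∧ DescendsFrom p m r := by
  simp [component]

lemma mem_component_iff_descendsFrom_root {p : V → Option V} {S : Finset V} {m r v : V}
    (hmr : DescendsFrom p m r) (hr : p r = none) :
    v ∈ component p S m ↔ v ∈ S ∧ DescendsFrom p v r := by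
  rw [mem_component]
  refine and_congr_right fun _ => ⟨fun ⟨s, hvs, hms⟩ => ?_, fun hvr => ⟨r, hvr, hmr⟩⟩
  have parent_unique : Relator.RightUnique fun v w => p v = some w :=
    fun _ _ _ h h' => Option.some.inj (h.symm.trans h')
  rcases ReflTransGen.total_of_right_unique parent_unique hms hmr with hsr | hrs
  · exact hvs.trans hsr
  · rcases ReflTransGen.cases_head hrs with rfl | ⟨u, hru, _⟩
    · exact hvs
    · simp [hr] at hru

variable [DecidableEq V]

open scoped Classical in
/-- The rooted forests with vertex set `S`, encoded by parent functions that are undefined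
outside `S`. -/
noncomputable def forests [Fintype V] (S : Finset V) : Finset (V → Option V) :=
  {p | IsForest p ∧ ∀ v w, p v = some w → v ∈ S ∧ w ∈ S}

open scoped Classical in
/-- The rooted trees with vertex set `S`: the rooted forests with exactly one root. -/
noncomputable def rootedTrees [Fintype V] (S : Finset V) : Finset (V → Option V) :=
  {p ∈ forests S | ∃ r ∈ S, ∀ v ∈ S, p v = none ↔ v = r}

/-- The forest induced by `p` on `T`: a vertex whose parent is outside `T` becomes a root. -/
def induceForest (p : V → Option V) (T : Finset V) : V → Option V :=
  fun v => if v ∈ T then (p v).filter (· ∈ T) else none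

/-- The union of two forests with disjoint vertex sets. -/
def unionForest (p q : V → Option V) : V → Option V :=
  fun v => (p v).or (q v)

/-- The tree on `C` obtained from a forest on `C \ {r}` by attaching all its roots to the new
root `r`. -/
def graft (C : Finset V) (r : V) (p : V → Option V) : V → Option V :=
  fun v => if v ∈ C.erase r then (p v).or (some r) else none

lemma induceForest_eq_some {p : V → Option V} {T : Finset V} {v w : V} :
    induceForest p T v = some w ↔ v ∈ T ∧ w ∈ T ∧ p v = some w := by
  unfold induceForest
  split_ifs with h <;> simp [Option.filter_eq_some_iff, h, and_comm]

lemma IsForest.induce {p : V → Option V} (hp : IsForest p) (T : Finset V) :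
    IsForest (induceForest p T) :=
  hp.mono fun _ _ h => (induceForest_eq_some.1 h).2.2

lemma graft_eq_none_iff {C : Finset V} {p : V → Option V} {r v : V} (hv : v ∈ C) :
    graft C r p v = none ↔ v = r := by
  simp [graft, hv]

variable [Fintype V] {S A B C : Finset V} {p x y : V → Option V}

lemma mem_forests :
    p ∈ forests S ↔ IsForest p ∧ ∀ v w, p v = some w → v ∈ S ∧ w ∈ S := by
  simp [forests]

lemma forests_empty : forests (∅ : Finset V) = {fun _ => none} := by
  ext p
  simp only [mem_forests, notMem_empty, and_self, imp_false, mem_singleton]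
  constructor
  · rintro ⟨-, h⟩
    funext v
    exact Option.eq_none_iff_forall_ne_some.2 (h v)
  · rintro rfl
    simp [IsForest]

lemma mem_rootedTrees :
    p ∈ rootedTrees S ↔ p ∈ forests S ∧ ∃ r ∈ S, ∀ v ∈ S, p v = none ↔ v = r := by
  simp [rootedTrees]

lemma induceForest_mem_forests (hp : IsForest p) (T : Finset V) :
    induceForest p T ∈ forests T :=
  mem_forests.2 ⟨hp.induce T, fun _ _ h =>
    ⟨(induceForest_eq_some.1 h).1, (induceForest_eq_some.1 h).2.1⟩⟩

lemma unionForest_eq_some (hx : x ∈ forests A) (hy : y ∈ forests B) (hAB : Disjoint A B)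
    {v w : V} : unionForest x y v = some w ↔ x v = some w ∨ y v = some w := by
  have hxA := (mem_forests.1 hx).2 v
  have hyB := (mem_forests.1 hy).2 v
  have hv : v ∈ A → v ∉ B := fun h => disjoint_left.1 hAB h
  unfold unionForest
  cases hxv : x v with
  | none => simp
  | some u => cases hyv : y v with
    | none => simp
    | some t => exact absurd (hyB t hyv).1 (hv (hxA u hxv).1)

lemma unionForest_comm (hx : x ∈ forests A) (hy : y ∈ forests B) (hAB : Disjoint A B) :
    unionForest x y = unionForest y x := by
  funext v
  ext w
  rw [unionForest_eq_some hx hy hAB, unionForest_eq_some hy hx hAB.symm, or_comm]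

lemma induceForest_unionForest_left (hx : x ∈ forests A) (hy : y ∈ forests B)
    (hAB : Disjoint A B) : induceForest (unionForest x y) A = x := by
  funext v
  ext w
  have hxA := (mem_forests.1 hx).2 v w
  have hyB := (mem_forests.1 hy).2 v w
  have hv : v ∈ A → v ∉ B := fun h => disjoint_left.1 hAB h
  rw [induceForest_eq_some, unionForest_eq_some hx hy hAB]
  tauto

lemma induceForest_unionForest_right (hx : x ∈ forests A) (hy : y ∈ forests B)
    (hAB : Disjoint A B) : induceForest (unionForest x y) B = y := by
  rw [unionForest_comm hx hy hAB, induceForest_unionForest_left hy hx hAB.symm]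

lemma unionForest_mem_forests (hx : x ∈ forests A) (hy : y ∈ forests B) (hAB : Disjoint A B) :
    unionForest x y ∈ forests (A ∪ B) := by
  obtain ⟨⟨f, hf⟩, hxA⟩ := mem_forests.1 hx
  obtain ⟨⟨g, hg⟩, hyB⟩ := mem_forests.1 hy
  refine mem_forests.2 ⟨⟨fun v => if v ∈ A then f v else g v, fun v w h => ?_⟩, fun v w h => ?_⟩
  all_goals rcases (unionForest_eq_some hx hy hAB).1 h with h | h
  · simpa [hxA v w h] using hf v w h
  · simpa [disjoint_right.1 hAB (hyB v w h).1, disjoint_right.1 hAB (hyB v w h).2] using hg v w h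
  · simp [hxA v w h]
  · simp [hyB v w h]

lemma card_closedSets_unionForest (hx : x ∈ forests A) (hy : y ∈ forests B)
    (hAB : Disjoint A B) :
    #(closedSets (unionForest x y) (A ∪ B)) = #(closedSets x A) * #(closedSets y B) := by
  rw [← card_product]
  have hxA := (mem_forests.1 hx).2
  have hyB := (mem_forests.1 hy).2
  refine card_nbij' (fun D => (D ∩ A, D ∩ B)) (fun E => E.1 ∪ E.2) ?_ ?_ ?_ ?_
  · intro D hD
    simp only [mem_coe, mem_closedSets, mem_product, unionForest_eq_some hx hy hAB] at hD ⊢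
    grind
  · intro E hE
    simp only [mem_coe, mem_closedSets, mem_product, unionForest_eq_some hx hy hAB] at hE ⊢
    grind [disjoint_left]
  · intro D hD
    have hDAB := (mem_closedSets.1 hD).1
    exact (inter_union_distrib_left D A B).symm.trans (inter_eq_left.2 hDAB)
  · rintro ⟨E, F⟩ hEF
    simp only [mem_coe, mem_closedSets, mem_product] at hEF
    have := disjoint_left.1 hAB
    ext v <;> grind

lemma mem_component_iff_of_parent (hp : p ∈ forests S) {m v w : V} (hvw : p v = some w) :
    v ∈ component p S m ↔ w ∈ component p S m := by
  obtain ⟨hv, hw⟩ := (mem_forests.1 hp).2 v w hvw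
  simp only [mem_component, hv, hw, true_and]
  constructor
  · rintro ⟨r, hvr, hmr⟩
    by_cases h : v = r
    · exact ⟨w, ReflTransGen.refl, (h ▸ hmr).tail hvw⟩
    · exact ⟨r, hvr.of_parent hvw h, hmr⟩
  · rintro ⟨r, hwr, hmr⟩
    exact ⟨r, ReflTransGen.head hvw hwr, hmr⟩

lemma unionForest_induceForest (hp : p ∈ forests S) (hC : ∀ v w, p v = some w → (v ∈ C ↔ w ∈ C)) :
    unionForest (induceForest p C) (induceForest p (S \ C)) = p := by
  have hpf := (mem_forests.1 hp).1
  funext v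
  ext w
  rw [unionForest_eq_some (induceForest_mem_forests hpf C) (induceForest_mem_forests hpf (S \ C))
    disjoint_sdiff, induceForest_eq_some, induceForest_eq_some]
  have hS := (mem_forests.1 hp).2 v w
  have hCvw := hC v w
  grind

lemma induceForest_component_mem_rootedTrees (hp : p ∈ forests S) {m : V} (hm : m ∈ S) :
    induceForest p (component p S m) ∈ rootedTrees (component p S m) := by
  obtain ⟨hpf, hpS⟩ := mem_forests.1 hp
  obtain ⟨r, hmr, hr⟩ := hpf.exists_root m
  have hrS : r ∈ S := hmr.mem (fun v w _ h => (hpS v w h).2) hm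
  refine mem_rootedTrees.2 ⟨induceForest_mem_forests hpf _, r, ?_, fun v hv => ⟨fun h => ?_, ?_⟩⟩
  · exact (mem_component_iff_descendsFrom_root hmr hr).2 ⟨hrS, ReflTransGen.refl⟩
  · rcases ReflTransGen.cases_head ((mem_component_iff_descendsFrom_root hmr hr).1 hv).2 with
      hvr | ⟨w, hvw, -⟩
    · exact hvr
    · have hw := (mem_component_iff_of_parent hp hvw).1 hv
      simp [induceForest_eq_some.2 ⟨hv, hw, hvw⟩] at h
  · rintro rfl
    simp [induceForest, hr]

lemma descendsFrom_root_of_mem_rootedTrees (hx : x ∈ forests A) {r : V}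
    (hr : ∀ v ∈ A, x v = none ↔ v = r) {v : V} (hv : v ∈ A) : DescendsFrom x v r := by
  obtain ⟨hxf, hxA⟩ := mem_forests.1 hx
  obtain ⟨s, hvs, hs⟩ := hxf.exists_root v
  rwa [← (hr s (hvs.mem (fun v w _ h => (hxA v w h).2) hv)).1 hs]

lemma component_unionForest (hx : x ∈ rootedTrees A) (hy : y ∈ forests B) (hAB : Disjoint A B)
    {m : V} (hm : m ∈ A) : component (unionForest x y) (A ∪ B) m = A := by
  obtain ⟨hxA, r, -, hr⟩ := mem_rootedTrees.1 hx
  have parent_iff {v w} := unionForest_eq_some hxA hy hAB (v := v) (w := w)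
  have hxA' := (mem_forests.1 hxA).2
  have hyB := (mem_forests.1 hy).2
  have notMem_B {v} : v ∈ A → v ∉ B := fun h => disjoint_left.1 hAB h
  ext v
  rw [mem_component]
  refine ⟨fun ⟨hv, s, hvs, hms⟩ => ?_, fun hv => ⟨mem_union_left B hv, r, ?_⟩⟩
  · have hsA : s ∈ A := hms.mem (fun v w _ h => by grind) hm
    by_contra hvA
    have hsB : s ∈ B := hvs.mem (fun v w _ h => by grind) ((mem_union.1 hv).resolve_left hvA)
    exact notMem_B hsA hsB
  · have descends : ∀ u ∈ A, DescendsFrom (unionForest x y) u r := fun u hu =>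
      (descendsFrom_root_of_mem_rootedTrees hxA hr hu).mono fun _ _ h => parent_iff.2 (.inl h)
    exact ⟨descends v hv, descends m hm⟩

lemma sum_forests_eq_sum_rootedTrees {M : Type*} [AddCommMonoid M] {m : V} (hm : m ∈ S)
    (g : ℕ → M) :
    ∑ p ∈ forests S, g #(closedSets p S) =
      ∑ C ∈ S.powerset with m ∈ C, ∑ x ∈ rootedTrees C, ∑ y ∈ forests (S \ C),
        g (#(closedSets x C) * #(closedSets y (S \ C))) := by
  simp_rw [← sum_product']
  rw [sum_sigma']
  symm
  refine sum_nbij' (fun z => unionForest z.2.1 z.2.2)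
    (fun p => ⟨component p S m, induceForest p (component p S m),
      induceForest p (S \ component p S m)⟩) ?_ ?_ ?_ ?_ ?_
  · rintro ⟨C, x, y⟩ hz
    simp only [mem_sigma, mem_filter, mem_powerset, mem_product] at hz
    obtain ⟨⟨hCS, -⟩, hx, hy⟩ := hz
    rw [← union_sdiff_of_subset hCS]
    exact unionForest_mem_forests (mem_rootedTrees.1 hx).1 hy disjoint_sdiff
  · intro p hp
    simp only [mem_sigma, mem_filter, mem_powerset, mem_product]
    exact ⟨⟨fun v hv => (mem_component.1 hv).1, mem_component.2 ⟨hm, m, .refl, .refl⟩⟩,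
      induceForest_component_mem_rootedTrees hp hm, induceForest_mem_forests (mem_forests.1 hp).1 _⟩
  · rintro ⟨C, x, y⟩ hz
    simp only [mem_sigma, mem_filter, mem_powerset, mem_product] at hz
    obtain ⟨⟨hCS, hmC⟩, hx, hy⟩ := hz
    have hxC := (mem_rootedTrees.1 hx).1
    have hcomp := component_unionForest hx hy disjoint_sdiff hmC
    rw [union_sdiff_of_subset hCS] at hcomp
    simp only [hcomp, induceForest_unionForest_left hxC hy disjoint_sdiff,
      induceForest_unionForest_right hxC hy disjoint_sdiff]
  · intro p hp
    exact unionForest_induceForest hp fun v w => mem_component_iff_of_parent hp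
  · rintro ⟨C, x, y⟩ hz
    simp only [mem_sigma, mem_filter, mem_powerset, mem_product] at hz
    obtain ⟨⟨hCS, -⟩, hx, hy⟩ := hz
    rw [← card_closedSets_unionForest (mem_rootedTrees.1 hx).1 hy disjoint_sdiff,
      union_sdiff_of_subset hCS]

lemma graft_eq_some {r v w : V} (hx : x ∈ forests (C.erase r)) :
    graft C r x v = some w ↔ v ∈ C.erase r ∧ (x v = some w ∨ x v = none ∧ w = r) := by
  have := (mem_forests.1 hx).2 v
  unfold graft
  split_ifs with hv <;> cases hxv : x v <;> grind

lemma graft_mem_rootedTrees {r : V} (hr : r ∈ C) (hx : x ∈ forests (C.erase r)) :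
    graft C r x ∈ rootedTrees C := by
  obtain ⟨⟨rank, hrank⟩, hxC⟩ := mem_forests.1 hx
  refine mem_rootedTrees.2 ⟨mem_forests.2
    ⟨⟨fun v => if v = r then 0 else rank v + 1, fun v w h => ?_⟩, fun v w h => ?_⟩,
    r, hr, fun v => graft_eq_none_iff⟩
  all_goals obtain ⟨hv, h | ⟨-, rfl⟩⟩ := (graft_eq_some hx).1 h
  · have := hrank v w h
    have := hxC v w h
    grind
  · simp [ne_of_mem_erase hv]
  · exact ⟨mem_of_mem_erase hv, mem_of_mem_erase (hxC v w h).2⟩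
  · exact ⟨mem_of_mem_erase hv, hr⟩

lemma induceForest_graft {r : V} (hx : x ∈ forests (C.erase r)) :
    induceForest (graft C r x) (C.erase r) = x := by
  funext v
  ext w
  have := (mem_forests.1 hx).2 v w
  rw [induceForest_eq_some, graft_eq_some hx]
  grind

lemma graft_induceForest {r : V} (hx : x ∈ forests C) (hr : ∀ v ∈ C, x v = none ↔ v = r) :
    graft C r (induceForest x (C.erase r)) = x := by
  funext v
  ext w
  obtain ⟨hxf, hxC⟩ := mem_forests.1 hx
  rw [graft_eq_some (induceForest_mem_forests hxf _)]
  unfold induceForest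
  cases hv : x v <;> grind [hr v, hxC v]

lemma root_mem_of_mem_closedSets {r : V} {D : Finset V} (hx : x ∈ forests C)
    (hr : ∀ v ∈ C, x v = none ↔ v = r) (hD : D ∈ closedSets x C) (hne : D.Nonempty) : r ∈ D := by
  obtain ⟨v, hv⟩ := hne
  obtain ⟨hDC, hclosed⟩ := mem_closedSets.1 hD
  exact (descendsFrom_root_of_mem_rootedTrees hx hr (hDC hv)).mem hclosed hv

lemma closedSets_graft {r : V} (hr : r ∈ C) (hx : x ∈ forests (C.erase r)) :
    closedSets (graft C r x) C = insert ∅ ((closedSets x (C.erase r)).image (insert r)) := by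
  have hgraft := (mem_rootedTrees.1 (graft_mem_rootedTrees hr hx)).1
  have parent_iff {v w} := graft_eq_some hx (v := v) (w := w)
  have hxC := (mem_forests.1 hx).2
  ext D
  rw [mem_insert, mem_image]
  constructor
  · intro hD
    refine D.eq_empty_or_nonempty.imp_right fun hne => ⟨D.erase r, ?_, insert_erase
      (root_mem_of_mem_closedSets hgraft (fun v => graft_eq_none_iff) hD hne)⟩
    have := mem_closedSets.1 hD
    rw [mem_closedSets]
    grind
  · rintro (rfl | ⟨E, hE, rfl⟩)
    · simp [mem_closedSets]
    · rw [mem_closedSets] at hE ⊢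
      grind

lemma card_closedSets_graft {r : V} (hr : r ∈ C) (hx : x ∈ forests (C.erase r)) :
    #(closedSets (graft C r x) C) = 1 + #(closedSets x (C.erase r)) := by
  rw [closedSets_graft hr hx, card_insert_of_notMem (by simp), card_image_of_injOn, add_comm]
  have notMem {E} (hE : E ∈ closedSets x (C.erase r)) : r ∉ E := fun h =>
    notMem_erase r C ((mem_closedSets.1 hE).1 h)
  intro E hE F hF h
  rw [← erase_insert (notMem hE), ← erase_insert (notMem hF)]
  exact congrArg (·.erase r) h

lemma sum_rootedTrees_eq_sum_forests {M : Type*} [AddCommMonoid M] (C : Finset V) (g : ℕ → M) :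
    ∑ x ∈ rootedTrees C, g #(closedSets x C) =
      ∑ r ∈ C, ∑ x ∈ forests (C.erase r), g (1 + #(closedSets x (C.erase r))) := by
  rw [sum_sigma']
  symm
  refine sum_nbij (fun z => graft C z.1 z.2) ?_ ?_ ?_ ?_
  · rintro ⟨r, x⟩ hz
    obtain ⟨hr, hx⟩ := mem_sigma.1 hz
    exact graft_mem_rootedTrees hr hx
  · rintro ⟨r, x⟩ hz ⟨s, y⟩ hz' h
    obtain ⟨hr, hx⟩ := mem_sigma.1 hz
    obtain ⟨hs, hy⟩ := mem_sigma.1 hz'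
    dsimp only at h hr hx hs hy
    obtain rfl : r = s := (graft_eq_none_iff hr).1 (h ▸ (graft_eq_none_iff hr).2 rfl)
    rw [← induceForest_graft hx, h, induceForest_graft hy]
  · intro x hx
    obtain ⟨hxC, r, hrC, hr⟩ := mem_rootedTrees.1 hx
    exact ⟨⟨r, induceForest x (C.erase r)⟩,
      mem_sigma.2 ⟨hrC, induceForest_mem_forests (mem_forests.1 hxC).1 _⟩,
      graft_induceForest hxC hr⟩
  · rintro ⟨r, x⟩ hz
    obtain ⟨hr, hx⟩ := mem_sigma.1 hz
    rw [card_closedSets_graft hr hx]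

end Forests

section Relabelling

open Finset

variable {U V : Type*} (f : U ↪ V)

/-- Transport of a parent function along an embedding. -/
noncomputable def mapForest (p : U → Option U) : V → Option V :=
  fun v => (Function.partialInv f v).bind fun u => (p u).map f

lemma mapForest_eq_some {f : U ↪ V} {p : U → Option U} {v w : V} :
    mapForest f p v = some w ↔ ∃ u t, f u = v ∧ f t = w ∧ p u = some t := by
  simp only [mapForest, Option.bind_eq_some_iff, Option.map_eq_some_iff,
    f.injective.isPartialInv _ _]
  grind

lemma mapForest_apply_eq_some {f : U ↪ V} {p : U → Option U} {u t : U} :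
    mapForest f p (f u) = some (f t) ↔ p u = some t := by
  simp [mapForest_eq_some]

lemma closedSets_mapForest (p : U → Option U) (S : Finset U) :
    closedSets (mapForest f p) (S.map f) = (closedSets p S).map (mapEmbedding f).toEmbedding := by
  ext D
  simp only [mem_closedSets, Finset.mem_map, RelEmbedding.coe_toEmbedding, mapEmbedding_apply,
    subset_map_iff]
  constructor
  · rintro ⟨⟨E, hE, rfl⟩, hclosed⟩
    refine ⟨E, ⟨hE, fun v w hv hvw => ?_⟩, rfl⟩
    simpa using hclosed (f v) (f w) (by simpa using hv) (mapForest_apply_eq_some.2 hvw)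
  · rintro ⟨E, ⟨hE, hclosed⟩, rfl⟩
    refine ⟨⟨E, hE, rfl⟩, fun v w hv hvw => ?_⟩
    obtain ⟨u, t, rfl, rfl, hut⟩ := mapForest_eq_some.1 hvw
    simp only [Finset.mem_map'] at hv ⊢
    exact hclosed u t hv hut

variable [Fintype V] [DecidableEq V]

lemma exists_mapForest_eq {S : Finset U} {q : V → Option V} (hq : q ∈ forests (S.map f)) :
    ∃ p, mapForest f p = q := by
  refine ⟨fun u => (q (f u)).bind (Function.partialInv f), ?_⟩
  funext v
  ext w
  have hqS := (mem_forests.1 hq).2 v w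
  simp only [mapForest_eq_some, Option.bind_eq_some_iff, f.injective.isPartialInv _ _]
  grind

variable [Fintype U] [DecidableEq U]

lemma mapForest_mem_forests {f : U ↪ V} {p : U → Option U} {S : Finset U} :
    mapForest f p ∈ forests (S.map f) ↔ p ∈ forests S := by
  simp only [mem_forests]
  constructor
  · rintro ⟨⟨rank, hrank⟩, hS⟩
    exact ⟨⟨rank ∘ f, fun v w h => hrank _ _ (mapForest_apply_eq_some.2 h)⟩,
      fun v w h => by simpa using hS _ _ (mapForest_apply_eq_some.2 h)⟩
  · rintro ⟨⟨rank, hrank⟩, hS⟩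
    refine ⟨⟨fun v => ((Function.partialInv f v).map rank).getD 0, fun v w h => ?_⟩,
      fun v w h => ?_⟩
    all_goals obtain ⟨u, t, rfl, rfl, hut⟩ := mapForest_eq_some.1 h
    · simpa [Function.partialInv_left f.injective] using hrank u t hut
    · simpa using hS u t hut

lemma sum_forests_map {M : Type*} [AddCommMonoid M] (S : Finset U) (g : ℕ → M) :
    ∑ q ∈ forests (S.map f), g #(closedSets q (S.map f)) =
      ∑ p ∈ forests S, g #(closedSets p S) := by
  symm
  refine sum_nbij (mapForest f) (fun p => mapForest_mem_forests.2) ?_ ?_ ?_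
  · intro p _ q _ h
    funext u
    ext t
    rw [← mapForest_apply_eq_some (f := f), h, mapForest_apply_eq_some]
  · intro q hq
    obtain ⟨p, rfl⟩ := exists_mapForest_eq f hq
    exact ⟨p, mapForest_mem_forests.1 hq, rfl⟩
  · intro p _
    rw [closedSets_mapForest, card_map]

end Relabelling

/-! ### The exponential formula for rooted forests -/

section ExponentialFormula

open Finset

/-- The sequence `b` is the coefficient sequence of `exp (∑ a i * X ^ (i + 1))`, expressed through
the logarithmic derivative. -/
structure IsExpSeq {A : Type*} [Semiring A] (a b : ℕ → A) : Prop where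
  zero : b 0 = 1
  succ (n : ℕ) : (n + 1) * b (n + 1) = ∑ ij ∈ antidiagonal n, (ij.1 + 1) * a ij.1 * b ij.2

/-- The coefficients of the exponential generating function of rooted forests in which a forest
with `Q` closed sets has weight `g Q`. -/
noncomputable def forestCoeff {M : Type*} [AddCommMonoid M] [Module ℝ M] (g : ℕ → M) (n : ℕ) : M :=
  (n ! : ℝ)⁻¹ • ∑ p ∈ forests (univ : Finset (Fin n)), g #(closedSets p univ)

lemma map_forestCoeff {M N : Type*} [AddCommMonoid M] [Module ℝ M] [AddCommMonoid N] [Module ℝ N]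
    (L : M →ₗ[ℝ] N) (g : ℕ → M) (n : ℕ) :
    L (forestCoeff g n) = forestCoeff (fun k => L (g k)) n := by
  rw [forestCoeff, map_smul, map_sum, forestCoeff]

lemma forestCoeff_congr {M : Type*} [AddCommMonoid M] [Module ℝ M] {g g' : ℕ → M}
    (h : ∀ k, k ≠ 0 → g k = g' k) (n : ℕ) : forestCoeff g n = forestCoeff g' n := by
  unfold forestCoeff
  congr! 2 with p
  exact h _ (card_closedSets_pos p univ).ne'

lemma forestCoeff_mono {g g' : ℕ → ℝ} (h : ∀ k, k ≠ 0 → g k ≤ g' k) (n : ℕ) :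
    forestCoeff g n ≤ forestCoeff g' n :=
  smul_le_smul_of_nonneg_left
    (sum_le_sum fun p _ => h _ (card_closedSets_pos p univ).ne') (by positivity)

lemma forestCoeff_nonneg {g : ℕ → ℝ} (h : ∀ k, 0 ≤ g k) (n : ℕ) : 0 ≤ forestCoeff g n :=
  smul_nonneg (by positivity) (sum_nonneg fun _ _ => h _)

lemma sum_forests_eq_forestCoeff {V M : Type*} [Fintype V] [DecidableEq V] [AddCommMonoid M]
    [Module ℝ M] (S : Finset V) (g : ℕ → M) :
    ∑ p ∈ forests S, g #(closedSets p S) = ((#S)! : ℝ) • forestCoeff g #S := by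
  let enum : Fin #S ↪ V := S.equivFin.symm.toEmbedding.trans (.subtype _)
  have hS : univ.map enum = S := by
    rw [← Finset.map_map, map_univ_equiv, univ_eq_attach, attach_map_val]
  rw [forestCoeff, smul_inv_smul₀ (by positivity), ← sum_forests_map enum univ g, hS]

lemma sum_powerset_mem_apply_card {V M : Type*} [DecidableEq V] [AddCommMonoid M] {S : Finset V}
    {m : V} (hm : m ∉ S) (f : ℕ → M) :
    ∑ C ∈ (insert m S).powerset with m ∈ C, f #C =
      ∑ i ∈ range (#S + 1), (#S).choose i • f (i + 1) := by
  rw [← sum_powerset_apply_card (fun i => f (i + 1))]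
  have notMem {C} (hC : C ∈ S.powerset) : m ∉ C := fun h => hm (mem_powerset.1 hC h)
  refine (sum_nbij' (insert m) (·.erase m) ?_ ?_ ?_ ?_ ?_).symm
  · grind
  · grind
  · exact fun C hC => erase_insert (notMem hC)
  · exact fun C hC => insert_erase (mem_filter.1 hC).2
  · exact fun C hC => by rw [card_insert_of_notMem (notMem hC)]

lemma sum_rootedTrees_eq_forestCoeff {V M : Type*} [Fintype V] [DecidableEq V] [AddCommMonoid M]
    [Module ℝ M] {C : Finset V} (hC : C.Nonempty) (g : ℕ → M) :
    ∑ x ∈ rootedTrees C, g #(closedSets x C) =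
      ((#C)! : ℝ) • forestCoeff (fun k => g (1 + k)) (#C - 1) := by
  rw [sum_rootedTrees_eq_sum_forests, sum_congr rfl fun r hr => by
    rw [sum_forests_eq_forestCoeff _ fun k => g (1 + k), card_erase_of_mem hr], sum_const,
    ← Nat.cast_smul_eq_nsmul ℝ, ← Nat.mul_factorial_pred hC.card_ne_zero, Nat.cast_mul, mul_smul]

variable {A : Type*} [CommSemiring A] [Algebra ℝ A]

lemma sum_forests_eq_sum_choose {V : Type*} [Fintype V] [DecidableEq V] {S : Finset V} {m : V}
    (hm : m ∉ S) (W : ℕ →* A) :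
    ∑ p ∈ forests (insert m S), W #(closedSets p (insert m S)) =
      ∑ i ∈ range (#S + 1), (#S).choose i • (((i + 1)! : ℝ) • forestCoeff (fun k => W (1 + k)) i *
        ((#S - i)! : ℝ) • forestCoeff W (#S - i)) := by
  have := sum_powerset_mem_apply_card hm fun k =>
    (k ! : ℝ) • forestCoeff (fun k => W (1 + k)) (k - 1) *
      ((#S + 1 - k)! : ℝ) • forestCoeff W (#S + 1 - k)
  simp only [Nat.add_sub_cancel, Nat.add_sub_add_right] at this
  rw [sum_forests_eq_sum_rootedTrees (mem_insert_self m S), ← this]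
  refine sum_congr rfl fun C hC => ?_
  obtain ⟨hCS, hmC⟩ := mem_filter.1 hC
  rw [← card_insert_of_notMem hm, ← card_sdiff_of_subset (mem_powerset.1 hCS),
    ← sum_forests_eq_forestCoeff, ← sum_rootedTrees_eq_forestCoeff ⟨m, hmC⟩, sum_mul_sum]
  simp_rw [map_mul]

lemma isExpSeq_forestCoeff (W : ℕ →* A) :
    IsExpSeq (forestCoeff fun k => W (1 + k)) (forestCoeff W) := by
  refine ⟨?_, fun n => ?_⟩
  · simp [forestCoeff, forests_empty]
  have h0 : (0 : Fin (n + 1)) ∉ univ.erase 0 := notMem_erase _ _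
  have hcard : #(univ.erase (0 : Fin (n + 1))) = n := by simp
  have := sum_forests_eq_sum_choose h0 W
  rw [insert_erase (mem_univ _), hcard, sum_forests_eq_forestCoeff, card_univ,
    Fintype.card_fin] at this
  calc (n + 1) * forestCoeff W (n + 1)
      = (n ! : ℝ)⁻¹ • ((n + 1)! : ℝ) • forestCoeff W (n + 1) := by
        rw [smul_smul, Nat.factorial_succ, Nat.cast_mul, mul_left_comm,
          inv_mul_cancel₀ (by positivity), mul_one, Nat.cast_smul_eq_nsmul, nsmul_eq_mul,
          Nat.cast_succ]
    _ = _ := by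
      rw [this, smul_sum, Nat.sum_antidiagonal_eq_sum_range_succ fun i j =>
        ((i : A) + 1) * forestCoeff (fun k => W (1 + k)) i * forestCoeff W j]
      refine sum_congr rfl fun i hi => ?_
      have hchoose := Nat.choose_mul_factorial_mul_factorial (mem_range_succ_iff.1 hi)
      have hscalar : (n ! : ℝ)⁻¹ * n.choose i * ((i + 1)! * (n - i)!) = (i + 1 : ℕ) := by
        rw [← hchoose, Nat.factorial_succ]
        have := (Nat.choose_pos (mem_range_succ_iff.1 hi)).ne'
        push_cast
        field_simp
      rw [← Nat.cast_smul_eq_nsmul ℝ, smul_mul_smul_comm, smul_smul, smul_smul, hscalar,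
        Nat.cast_smul_eq_nsmul, nsmul_eq_mul, Nat.cast_succ, mul_assoc]

end ExponentialFormula

/-! ### Forests with a given number of closed sets -/

section Derivation

open Finset PowerSeries

variable {R A : Type*} [CommSemiring R] [CommRing A] [Algebra R A] {a b : ℕ → A}

lemma IsExpSeq.sum_mul_derivation (h : IsExpSeq a b) (D : Derivation R A A) {n : ℕ}
    (hD : ∀ m < n, D (b (m + 1)) = ∑ ij ∈ antidiagonal m, D (a ij.1) * b ij.2) :
    ∑ ij ∈ antidiagonal n, (ij.1 + 1) * a ij.1 * D (b ij.2) =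
      ∑ ij ∈ antidiagonal n, D (a ij.1) * (ij.2 * b ij.2) := by
  cases n with
  | zero => simp [h.zero]
  | succ m =>
    have := congrArg (coeff m) (mul_left_comm (PowerSeries.mk fun i => (i + 1) * a i)
      (PowerSeries.mk fun i => D (a i)) (PowerSeries.mk b))
    simp only [coeff_mul, coeff_mk] at this
    rw [Nat.sum_antidiagonal_succ', Nat.sum_antidiagonal_succ']
    simp only [h.zero, Derivation.map_one_eq_zero, Nat.cast_zero, mul_zero, zero_mul, zero_add,
      Nat.cast_succ, h.succ]
    rw [← this]
    exact sum_congr rfl fun ij hij => by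
      rw [hD ij.2 (by grind [HasAntidiagonal.mem_antidiagonal])]

/-- The chain rule `D (exp a) = D a * exp a`. -/
lemma IsExpSeq.derivation_succ [IsAddTorsionFree A] (h : IsExpSeq a b) (D : Derivation R A A)
    (n : ℕ) : D (b (n + 1)) = ∑ ij ∈ antidiagonal n, D (a ij.1) * b ij.2 := by
  induction n using Nat.strong_induction_on with
  | _ n ih =>
    refine nsmul_right_injective n.succ_ne_zero ?_
    calc (n + 1) • D (b (n + 1))
        = D ((n + 1) * b (n + 1)) := by
          rw [← map_nsmul, nsmul_eq_mul, Nat.cast_succ]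
      _ = ∑ ij ∈ antidiagonal n, (ij.1 + 1) * a ij.1 * D (b ij.2) +
            ∑ ij ∈ antidiagonal n, b ij.2 * ((ij.1 + 1) * D (a ij.1)) := by
          rw [h.succ, map_sum, ← sum_add_distrib]
          refine sum_congr rfl fun ij _ => ?_
          have : D ((ij.1 + 1) * a ij.1) = (ij.1 + 1) * D (a ij.1) := by
            rw [← Nat.cast_succ, ← nsmul_eq_mul, map_nsmul, nsmul_eq_mul]
          rw [Derivation.leibniz, this, smul_eq_mul, smul_eq_mul]
      _ = (n + 1) • ∑ ij ∈ antidiagonal n, D (a ij.1) * b ij.2 := by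
          rw [h.sum_mul_derivation D ih, ← sum_add_distrib, smul_sum]
          refine sum_congr rfl fun ij hij => ?_
          rw [← HasAntidiagonal.mem_antidiagonal.1 hij, nsmul_eq_mul]
          push_cast
          ring

end Derivation

section TypeCoeff

open Finset ArithmeticFunction

/-- The Dirichlet series `k ^ (-z)`, which is `0` for `k = 0`. -/
noncomputable def dirac (R : Type*) [CommSemiring R] : ℕ →* ArithmeticFunction R where
  toFun k := ⟨fun q => if k = q ∧ q ≠ 0 then 1 else 0, by simp⟩
  map_one' := by
    ext q
    rw [one_apply, coe_mk]
    grind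
  map_mul' k l := by
    ext q
    change (if k * l = q ∧ q ≠ 0 then (1 : R) else 0) = ∑ d ∈ q.divisorsAntidiagonal,
      (if k = d.1 ∧ d.1 ≠ 0 then 1 else 0) * (if l = d.2 ∧ d.2 ≠ 0 then 1 else 0)
    rcases eq_or_ne q 0 with rfl | hq
    · simp
    by_cases h : k * l = q
    · rw [if_pos ⟨h, hq⟩, sum_eq_single_of_mem (k, l) (by simp [h, hq])]
      · rw [if_pos (by grind), if_pos (by grind), mul_one]
      · grind
    · rw [if_neg (by tauto), sum_eq_zero]
      grind [Nat.mem_divisorsAntidiagonal]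

lemma dirac_apply {R : Type*} [CommSemiring R] {k q : ℕ} (hk : k ≠ 0) :
    dirac R k q = if k = q then 1 else 0 := by
  change (if k = q ∧ q ≠ 0 then (1 : R) else 0) = _
  grind

/-- The derivation of the ring of Dirichlet series that multiplies the `q`-th coefficient by the
number of prime factors of `q`. -/
noncomputable def cardFactorsDerivation (R : Type*) [CommRing R] :
    Derivation R (ArithmeticFunction R) (ArithmeticFunction R) :=
  Derivation.mk'
    { toFun f := ⟨fun q => cardFactors q * f q, by simp⟩
      map_add' := fun f g => by ext q; exact mul_add _ _ _
      map_smul' := fun c f => by ext q; exact mul_left_comm _ _ _ }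
    fun f g => by
      ext q
      rw [smul_eq_mul, smul_eq_mul, mul_comm g, ArithmeticFunction.add_apply, mul_apply, mul_apply,
        ← sum_add_distrib]
      change (cardFactors q : R) * (f * g) q = ∑ d ∈ q.divisorsAntidiagonal,
        (f d.1 * (cardFactors d.2 * g d.2) + cardFactors d.1 * f d.1 * g d.2)
      rw [mul_apply, mul_sum]
      refine sum_congr rfl fun d hd => ?_
      obtain ⟨h1, h2⟩ := Nat.ne_zero_of_mem_divisorsAntidiagonal hd
      rw [← (Nat.mem_divisorsAntidiagonal.1 hd).1, cardFactors_mul h1 h2]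
      push_cast
      ring

lemma cardFactorsDerivation_apply {R : Type*} [CommRing R] (f : ArithmeticFunction R) (q : ℕ) :
    cardFactorsDerivation R f q = cardFactors q * f q := rfl

/-- The exponential generating function coefficient of the rooted forests with `n` vertices and
`q` closed sets is `typeCoeff n q`; they are collected into a Dirichlet series in `q`. -/
noncomputable def typeCoeff (n : ℕ) : ArithmeticFunction ℝ :=
  forestCoeff (dirac ℝ) n

lemma isExpSeq_typeCoeff :
    IsExpSeq (forestCoeff fun k => dirac ℝ (1 + k)) fun n => typeCoeff n :=
  isExpSeq_forestCoeff (dirac ℝ)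

/-- Evaluation of an arithmetic function at `q`, as a linear map. -/
def evalLinearMap (q : ℕ) : ArithmeticFunction ℝ →ₗ[ℝ] ℝ where
  toFun f := f q
  map_add' _ _ := rfl
  map_smul' _ _ := rfl

lemma forestCoeff_apply (g : ℕ → ArithmeticFunction ℝ) (n q : ℕ) :
    forestCoeff g n q = forestCoeff (fun k => g k q) n :=
  map_forestCoeff (evalLinearMap q) g n

lemma forestCoeff_dirac_one_add_apply (n q : ℕ) :
    forestCoeff (fun k => dirac ℝ (1 + k)) n q = typeCoeff n (q - 1) := by
  rw [typeCoeff, forestCoeff_apply, forestCoeff_apply]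
  refine forestCoeff_congr (fun k hk => ?_) n
  rw [dirac_apply (by omega), dirac_apply hk]
  exact if_congr (by omega) rfl rfl

lemma typeCoeff_apply (n q : ℕ) :
    typeCoeff n q = forestCoeff (fun k => if k = q then 1 else 0) n := by
  rw [typeCoeff, forestCoeff_apply]
  exact forestCoeff_congr (fun k hk => dirac_apply hk) n

lemma typeCoeff_nonneg (n q : ℕ) : 0 ≤ typeCoeff n q := by
  rw [typeCoeff_apply]
  exact forestCoeff_nonneg (fun k => by split_ifs <;> simp) n

lemma typeCoeff_zero_apply (q : ℕ) : typeCoeff 0 q = if q = 1 then 1 else 0 := by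
  rw [isExpSeq_typeCoeff.zero, one_apply]

lemma typeCoeff_succ_one (n : ℕ) : typeCoeff (n + 1) 1 = 0 := by
  have := congrArg (evalLinearMap 1) (isExpSeq_typeCoeff.succ n)
  rw [map_sum, sum_eq_zero] at this
  · rw [← Nat.cast_succ, ← nsmul_eq_mul, map_nsmul] at this
    exact (smul_eq_zero.1 this).resolve_left n.succ_ne_zero
  · intro ij _
    rw [← Nat.cast_succ, ← nsmul_eq_mul, smul_mul_assoc, map_nsmul]
    change _ • (_ * _ : ArithmeticFunction ℝ) 1 = _
    simp [forestCoeff_dirac_one_add_apply]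

lemma cardFactors_mul_typeCoeff_succ (n q : ℕ) : cardFactors q * typeCoeff (n + 1) q =
    ∑ d ∈ q.divisorsAntidiagonal, cardFactors d.1 *
      ∑ ij ∈ antidiagonal n, typeCoeff ij.1 (d.1 - 1) * typeCoeff ij.2 d.2 := by
  have : IsAddTorsionFree (ArithmeticFunction ℝ) := ⟨fun k hk f g h => by
    ext q
    have := congrArg (evalLinearMap q) h
    simp only [map_nsmul] at this
    exact nsmul_right_injective hk this⟩
  have := congrArg (evalLinearMap q)
    (isExpSeq_typeCoeff.derivation_succ (cardFactorsDerivation ℝ) n)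
  rw [map_sum] at this
  refine this.trans ?_
  simp_rw [mul_sum]
  rw [sum_comm]
  refine sum_congr rfl fun ij _ => ?_
  change (cardFactorsDerivation ℝ _ * _ : ArithmeticFunction ℝ) q = _
  rw [mul_apply]
  simp_rw [cardFactorsDerivation_apply, forestCoeff_dirac_one_add_apply, mul_assoc]

end TypeCoeff

/-! ### Bounds for generating functions at a point -/

section Series

open Finset

lemma sum_range_antidiagonal_le_mul {u v : ℕ → ℝ} (hu : ∀ i, 0 ≤ u i) (hv : ∀ i, 0 ≤ v i) (N : ℕ) :
    ∑ n ∈ range N, ∑ ij ∈ antidiagonal n, u ij.1 * v ij.2 ≤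
      (∑ i ∈ range N, u i) * ∑ j ∈ range N, v j := by
  simp_rw [fun n => Nat.sum_antidiagonal_eq_sum_range_succ (fun i j => u i * v j) n]
  rw [sum_range_diag_flip N fun i j => u i * v j, sum_mul_sum]
  exact sum_le_sum fun i _ => sum_le_sum_of_subset_of_nonneg (range_mono (Nat.sub_le _ _))
    fun j _ _ => mul_nonneg (hu i) (hv j)

lemma sum_antidiagonal_mul_pow (u v : ℕ → ℝ) (n : ℕ) (x : ℝ) :
    (∑ ij ∈ antidiagonal n, u ij.1 * v ij.2) * x ^ n =
      ∑ ij ∈ antidiagonal n, u ij.1 * x ^ ij.1 * (v ij.2 * x ^ ij.2) := by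
  rw [sum_mul]
  refine sum_congr rfl fun ij hij => ?_
  rw [← HasAntidiagonal.mem_antidiagonal.1 hij, pow_add, mul_mul_mul_comm]

lemma hasDerivAt_sum_mul_pow_succ (a : ℕ → ℝ) (N : ℕ) (y : ℝ) :
    HasDerivAt (fun y => ∑ n ∈ range N, a n * y ^ (n + 1))
      (∑ n ∈ range N, (n + 1) * a n * y ^ n) y := by
  refine HasDerivAt.fun_sum fun n _ => ?_
  refine ((hasDerivAt_pow (n + 1) y).const_mul (a n)).congr_deriv ?_
  rw [Nat.add_sub_cancel]
  push_cast
  ring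

lemma le_exp_of_deriv_le {f f' g g' : ℝ → ℝ} (hf : ∀ y, HasDerivAt f (f' y) y)
    (hg : ∀ y, HasDerivAt g (g' y) y) (hle : ∀ y, 0 ≤ y → f' y ≤ g' y * f y) {x : ℝ}
    (hx : 0 ≤ x) : f x ≤ f 0 * Real.exp (g x - g 0) := by
  have hF y : HasDerivAt (fun y => f y * Real.exp (-g y))
      (f' y * Real.exp (-g y) + f y * (Real.exp (-g y) * -g' y)) y :=
    (hf y).mul (hg y).neg.exp
  have hanti : AntitoneOn (fun y => f y * Real.exp (-g y)) (Set.Ici 0) := by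
    refine antitoneOn_of_deriv_nonpos (convex_Ici 0)
      (fun y _ => (hF y).continuousAt.continuousWithinAt)
      (fun y _ => (hF y).differentiableAt.differentiableWithinAt) fun y hy => ?_
    rw [interior_Ici] at hy
    rw [(hF y).deriv]
    linarith [mul_le_mul_of_nonneg_right (hle y (le_of_lt hy)) (Real.exp_pos (-g y)).le]
  have := hanti Set.self_mem_Ici hx hx
  rw [Real.exp_sub, mul_div_assoc', le_div_iff₀ (Real.exp_pos _)]
  simp only [Real.exp_neg, ← div_eq_mul_inv] at this
  rwa [div_le_iff₀ (Real.exp_pos _), div_mul_eq_mul_div, le_div_iff₀ (Real.exp_pos _)] at this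

lemma IsExpSeq.sum_le_exp {a b : ℕ → ℝ} (h : IsExpSeq a b) (ha : ∀ i, 0 ≤ a i)
    (hb : ∀ i, 0 ≤ b i) (N : ℕ) {x : ℝ} (hx : 0 ≤ x) :
    ∑ n ∈ range (N + 1), b n * x ^ n ≤ Real.exp (∑ n ∈ range N, a n * x ^ (n + 1)) := by
  have hf y := (hasDerivAt_sum_mul_pow_succ (fun n => b (n + 1)) N y).add_const (b 0 * y ^ 0)
  have := le_exp_of_deriv_le (f := fun y => ∑ n ∈ range (N + 1), b n * y ^ n)
    (fun y => by simpa only [sum_range_succ', pow_zero] using hf y)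
    (hasDerivAt_sum_mul_pow_succ a N) (fun y hy => ?_) hx
  · simpa [sum_range_succ', h.zero] using this
  have hub : ∑ n ∈ range N, b n * y ^ n ≤ ∑ n ∈ range (N + 1), b n * y ^ n :=
    sum_le_sum_of_subset_of_nonneg (range_mono N.le_succ)
      fun n _ _ => mul_nonneg (hb n) (pow_nonneg hy n)
  have ha' i : 0 ≤ (i + 1) * a i * y ^ i := by have := ha i; positivity
  calc ∑ n ∈ range N, (n + 1) * b (n + 1) * y ^ n
      = ∑ n ∈ range N, ∑ ij ∈ antidiagonal n, (ij.1 + 1) * a ij.1 * y ^ ij.1 *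
          (b ij.2 * y ^ ij.2) := by
        simp_rw [h.succ]
        exact sum_congr rfl fun n _ => sum_antidiagonal_mul_pow (fun i => (i + 1) * a i) b n y
    _ ≤ (∑ n ∈ range N, (n + 1) * a n * y ^ n) * ∑ n ∈ range N, b n * y ^ n :=
        sum_range_antidiagonal_le_mul ha' (fun n => mul_nonneg (hb n) (pow_nonneg hy n)) N
    _ ≤ _ := mul_le_mul_of_nonneg_left hub (sum_nonneg fun i _ => ha' i)

end Series

section TypeBounds

open Finset ArithmeticFunction

lemma cardFactors_mul_sum_typeCoeff_le {x : ℝ} (hx : 0 ≤ x) (N : ℕ) {q : ℕ} (hq : q ≠ 1) :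
    cardFactors q * ∑ n ∈ range N, typeCoeff n q * x ^ n ≤
      ∑ d ∈ q.divisorsAntidiagonal, cardFactors d.1 *
        (x * (∑ n ∈ range N, typeCoeff n (d.1 - 1) * x ^ n) *
          ∑ n ∈ range N, typeCoeff n d.2 * x ^ n) := by
  have nonneg q n : 0 ≤ typeCoeff n q * x ^ n := mul_nonneg (typeCoeff_nonneg n q) (by positivity)
  have shift : ∑ n ∈ range N, typeCoeff n q * x ^ n ≤
      ∑ n ∈ range N, typeCoeff (n + 1) q * x ^ (n + 1) := by
    have h1 := sum_range_succ' (fun n => typeCoeff n q * x ^ n) N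
    have h2 := sum_range_succ (fun n => typeCoeff n q * x ^ n) N
    simp only [typeCoeff_zero_apply, if_neg hq, zero_mul, add_zero] at h1
    linarith [nonneg q N]
  calc cardFactors q * ∑ n ∈ range N, typeCoeff n q * x ^ n
      ≤ cardFactors q * ∑ n ∈ range N, typeCoeff (n + 1) q * x ^ (n + 1) := by gcongr
    _ = ∑ n ∈ range N, (∑ d ∈ q.divisorsAntidiagonal, cardFactors d.1 * (x *
          ∑ ij ∈ antidiagonal n, (typeCoeff ij.1 (d.1 - 1) * x ^ ij.1) *
            (typeCoeff ij.2 d.2 * x ^ ij.2))) := by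
      rw [mul_sum]
      refine sum_congr rfl fun n _ => ?_
      rw [← mul_assoc, cardFactors_mul_typeCoeff_succ, sum_mul]
      refine sum_congr rfl fun d _ => ?_
      rw [← sum_antidiagonal_mul_pow (fun i => typeCoeff i (d.1 - 1)) fun j => typeCoeff j d.2]
      ring
    _ = ∑ d ∈ q.divisorsAntidiagonal, cardFactors d.1 * (x * ∑ n ∈ range N,
          ∑ ij ∈ antidiagonal n, (typeCoeff ij.1 (d.1 - 1) * x ^ ij.1) *
            (typeCoeff ij.2 d.2 * x ^ ij.2)) := by
      rw [sum_comm]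
      simp_rw [mul_sum]
    _ ≤ _ := by
      simp_rw [mul_assoc x]
      gcongr with d
      exact sum_range_antidiagonal_le_mul (nonneg _) (nonneg _) N

/-- `U` is a supersolution of the recursion for the generating functions of `typeCoeff`. -/
lemma sum_typeCoeff_le {x : ℝ} (hx : 0 ≤ x) {M : ℕ} {U : ℕ → ℝ} (hU : ∀ q, 0 ≤ U q)
    (hU1 : 1 ≤ U 1)
    (hrec : ∀ q ∈ Icc 2 M, ∑ d ∈ q.divisorsAntidiagonal,
      cardFactors d.1 * (x * U (d.1 - 1) * U d.2) ≤ cardFactors q * U q)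
    (N : ℕ) {q : ℕ} (hq : q ≤ M) : ∑ n ∈ range N, typeCoeff n q * x ^ n ≤ U q := by
  have nonneg q n : 0 ≤ typeCoeff n q * x ^ n := mul_nonneg (typeCoeff_nonneg n q) (by positivity)
  induction q using Nat.strong_induction_on with
  | _ q ih =>
    rcases Nat.lt_or_ge q 2 with h2 | h2
    · interval_cases q
      · simp [hU]
      · cases N with
        | zero => simpa using hU 1
        | succ N => simpa [sum_range_succ', typeCoeff_succ_one, typeCoeff_zero_apply] using hU1
    have hΩ : 0 < (cardFactors q : ℝ) := by
      exact_mod_cast cardFactors_pos_iff_one_lt.2 (by omega : 1 < q)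
    rw [← mul_le_mul_iff_right₀ hΩ]
    refine (cardFactors_mul_sum_typeCoeff_le hx N (by omega)).trans
      ((sum_le_sum fun d hd => ?_).trans (hrec q (by simp [h2, hq])))
    obtain ⟨hd, -⟩ := Nat.mem_divisorsAntidiagonal.1 hd
    rcases eq_or_ne d.1 1 with h1 | h1
    · simp [h1]
    have hd2 : d.1 ≤ q ∧ d.2 < q := by
      have : d.1 ≠ 0 ∧ d.2 ≠ 0 := by rw [← mul_ne_zero_iff]; omega
      constructor <;> nlinarith [show 2 ≤ d.1 by omega, show 1 ≤ d.2 by omega]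
    gcongr
    · exact sum_nonneg fun n _ => nonneg _ n
    · exact mul_nonneg hx (hU _)
    · exact ih _ (by omega) (by omega)
    · exact ih _ hd2.2 (by omega)

end TypeBounds

/-! ### Fractional moments of the number of closed sets -/

section Moments

open Finset

/-- The excess of `(1 + q) ^ s` over `(1 + 1 / (M + 1)) ^ s * q ^ s`, positive exactly for the
small values `q ≤ M`. -/
noncomputable def momentExcess (M : ℕ) (s : ℝ) (q : ℕ) : ℝ :=
  (1 + q : ℝ) ^ s - ((1 + (M + 1 : ℝ)⁻¹) * q) ^ s

lemma one_add_inv_mul_le_iff {M a : ℕ} :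
    (1 + (M + 1 : ℝ)⁻¹) * a ≤ 1 + a ↔ a ≤ M + 1 := by
  rw [one_add_mul, add_comm, add_le_add_iff_right, inv_mul_le_iff₀ (by positivity), mul_one]
  exact_mod_cast Iff.rfl

lemma momentExcess_nonneg {s : ℝ} (hs : 0 ≤ s) {M q : ℕ} (hq : q ≤ M + 1) :
    0 ≤ momentExcess M s q :=
  sub_nonneg.2 (Real.rpow_le_rpow (by positivity) (one_add_inv_mul_le_iff.2 hq) hs)

lemma one_add_rpow_le {s : ℝ} (hs : 0 ≤ s) (M : ℕ) {a : ℕ} (ha : a ≠ 0) :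
    ((1 + a : ℕ) : ℝ) ^ s ≤ (1 + (M + 1 : ℝ)⁻¹) ^ s * (a : ℝ) ^ s +
      ∑ q ∈ Icc 1 M, momentExcess M s q * if a = q then 1 else 0 := by
  simp only [mul_ite, mul_one, mul_zero, sum_ite_eq, mem_Icc, Nat.cast_add, Nat.cast_one]
  rw [← Real.mul_rpow (by positivity) (by positivity)]
  split_ifs with h
  · rw [momentExcess, add_sub_cancel]
  · rw [add_zero]
    refine Real.rpow_le_rpow (by positivity) ?_ hs
    have haM : (M + 1 : ℝ) ≤ a := by
      exact_mod_cast (by omega : M + 1 ≤ a)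
    rw [one_add_mul, add_comm, add_le_add_iff_left, le_inv_mul_iff₀ (by positivity), mul_one]
    exact haM

lemma isExpSeq_forestCoeff_rpow (s : ℝ) :
    IsExpSeq (forestCoeff fun k => ((1 + k : ℕ) : ℝ) ^ s) (forestCoeff fun k => (k : ℝ) ^ s) :=
  isExpSeq_forestCoeff
    { toFun k := (k : ℝ) ^ s
      map_one' := by simp
      map_mul' k l := by rw [Nat.cast_mul, Real.mul_rpow k.cast_nonneg l.cast_nonneg] }

lemma forestCoeff_one_add_rpow_le {s : ℝ} (hs : 0 ≤ s) (M n : ℕ) :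
    forestCoeff (fun k => ((1 + k : ℕ) : ℝ) ^ s) n ≤
      (1 + (M + 1 : ℝ)⁻¹) ^ s * forestCoeff (fun k => (k : ℝ) ^ s) n +
        ∑ q ∈ Icc 1 M, momentExcess M s q * typeCoeff n q := by
  refine (forestCoeff_mono (fun k hk => one_add_rpow_le hs M hk) n).trans_eq ?_
  simp_rw [typeCoeff_apply, forestCoeff, sum_add_distrib, smul_add, ← mul_sum, mul_smul_comm]
  rw [sum_comm, smul_sum]
  simp_rw [← mul_sum]

variable {M : ℕ} {U : ℕ → ℝ} {lam s : ℝ}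

lemma sum_forestCoeff_one_add_rpow_le (hs0 : 0 ≤ s) {x : ℝ} (hx : 0 ≤ x) {N : ℕ}
    (hU : ∀ q ∈ Icc 1 M, ∑ n ∈ range N, typeCoeff n q * x ^ n ≤ U q) :
    ∑ n ∈ range N, forestCoeff (fun k => ((1 + k : ℕ) : ℝ) ^ s) n * x ^ (n + 1) ≤
      x * ((1 + (M + 1 : ℝ)⁻¹) ^ s * ∑ n ∈ range N, forestCoeff (fun k => (k : ℝ) ^ s) n * x ^ n +
        ∑ q ∈ Icc 1 M, momentExcess M s q * U q) :=
  calc ∑ n ∈ range N, forestCoeff (fun k => ((1 + k : ℕ) : ℝ) ^ s) n * x ^ (n + 1)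
      ≤ ∑ n ∈ range N, ((1 + (M + 1 : ℝ)⁻¹) ^ s * forestCoeff (fun k => (k : ℝ) ^ s) n +
          ∑ q ∈ Icc 1 M, momentExcess M s q * typeCoeff n q) * x ^ (n + 1) := by
        gcongr with n
        exact forestCoeff_one_add_rpow_le hs0 M n
    _ = x * ((1 + (M + 1 : ℝ)⁻¹) ^ s * ∑ n ∈ range N, forestCoeff (fun k => (k : ℝ) ^ s) n * x ^ n +
          ∑ q ∈ Icc 1 M, momentExcess M s q * ∑ n ∈ range N, typeCoeff n q * x ^ n) := by
        simp_rw [mul_sum (range N)]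
        rw [sum_comm (s := Icc 1 M), ← sum_add_distrib, mul_sum]
        refine sum_congr rfl fun n _ => ?_
        simp_rw [← mul_assoc (momentExcess M s _), ← sum_mul]
        ring
    _ ≤ _ := by
        gcongr with q hq
        · exact momentExcess_nonneg hs0 (by grind)
        · exact hU q hq

/-- If the partial sum up to some degree is at most `e`, then the exponent in
`IsExpSeq.sum_le_exp` is at most `1`, so the partial sum one degree further is at most `e` too. -/
lemma sum_forestCoeff_rpow_le (hs0 : 0 ≤ s)
    (hU : ∀ q ∈ Icc 1 M, ∀ N, ∑ n ∈ range N, typeCoeff n q * Real.exp (-1) ^ n ≤ U q)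
    (hs : (1 + (M + 1 : ℝ)⁻¹) ^ s + Real.exp (-1) * ∑ q ∈ Icc 1 M, momentExcess M s q * U q ≤
      Real.exp (lam * s)) (N : ℕ) :
    ∑ n ∈ range (N + 1), forestCoeff (fun k => (k : ℝ) ^ s) n * Real.exp (-(1 + lam * s)) ^ n ≤
      Real.exp 1 := by
  set x := Real.exp (-(1 + lam * s)) with hx
  have hx0 : 0 ≤ x := (Real.exp_pos _).le
  have rpow_nonneg (n : ℕ) : 0 ≤ (n : ℝ) ^ s := by positivity
  have hU0 q (hq : q ∈ Icc 1 M) : 0 ≤ U q := by simpa using hU q hq 0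
  have hexcess : 0 ≤ ∑ q ∈ Icc 1 M, momentExcess M s q * U q :=
    sum_nonneg fun q hq => mul_nonneg (momentExcess_nonneg hs0 (by grind)) (hU0 q hq)
  have hlam : 0 ≤ lam * s := by
    rw [← Real.one_le_exp_iff]
    have : 1 ≤ (1 + (M + 1 : ℝ)⁻¹) ^ s :=
      Real.one_le_rpow (le_add_of_nonneg_right (by positivity)) hs0
    nlinarith [Real.exp_pos (-1)]
  have hUx q (hq : q ∈ Icc 1 M) N : ∑ n ∈ range N, typeCoeff n q * x ^ n ≤ U q := by
    refine le_trans ?_ (hU q hq N)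
    gcongr with n
    · exact typeCoeff_nonneg n q
    · exact Real.exp_le_exp.2 (by linarith)
  have hstep N := (isExpSeq_forestCoeff_rpow s).sum_le_exp
    (fun n => forestCoeff_nonneg (fun k => rpow_nonneg (1 + k)) n)
    (fun n => forestCoeff_nonneg rpow_nonneg n) N hx0
  induction N with
  | zero => exact (hstep 0).trans (by simp)
  | succ N ih =>
    refine (hstep (N + 1)).trans (Real.exp_le_exp.2 ?_)
    calc _ ≤ x * ((1 + (M + 1 : ℝ)⁻¹) ^ s *
            ∑ n ∈ range (N + 1), forestCoeff (fun k => (k : ℝ) ^ s) n * x ^ n +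
              ∑ q ∈ Icc 1 M, momentExcess M s q * U q) :=
          sum_forestCoeff_one_add_rpow_le hs0 hx0 fun q hq => hUx q hq _
      _ ≤ x * ((1 + (M + 1 : ℝ)⁻¹) ^ s * Real.exp 1 +
              ∑ q ∈ Icc 1 M, momentExcess M s q * U q) := by gcongr
      _ = x * Real.exp 1 * ((1 + (M + 1 : ℝ)⁻¹) ^ s +
            Real.exp (-1) * ∑ q ∈ Icc 1 M, momentExcess M s q * U q) := by
          have : Real.exp 1 * Real.exp (-1) = 1 := by rw [← Real.exp_add]; simp
          linear_combination (-x * ∑ q ∈ Icc 1 M, momentExcess M s q * U q) * this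
      _ ≤ x * Real.exp 1 * Real.exp (lam * s) := by gcongr
      _ = 1 := by rw [hx, ← Real.exp_add, ← Real.exp_add]; simp

lemma forestCoeff_rpow_le (hs0 : 0 ≤ s)
    (hU : ∀ q ∈ Icc 1 M, ∀ N, ∑ n ∈ range N, typeCoeff n q * Real.exp (-1) ^ n ≤ U q)
    (hs : (1 + (M + 1 : ℝ)⁻¹) ^ s + Real.exp (-1) * ∑ q ∈ Icc 1 M, momentExcess M s q * U q ≤
      Real.exp (lam * s)) (n : ℕ) :
    forestCoeff (fun k => (k : ℝ) ^ s) n ≤ Real.exp 1 * Real.exp (1 + lam * s) ^ n := by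
  have hterm := (single_le_sum (f := fun n => forestCoeff (fun k => (k : ℝ) ^ s) n *
    Real.exp (-(1 + lam * s)) ^ n) (fun i _ => mul_nonneg
      (forestCoeff_nonneg (fun k => by positivity) i) (by positivity))
    (self_mem_range_succ n)).trans (sum_forestCoeff_rpow_le hs0 hU hs n)
  rwa [Real.exp_neg, inv_pow, mul_inv_le_iff₀ (by positivity)] at hterm

lemma hasDerivAt_const_rpow_zero {a : ℝ} (ha : 0 < a) :
    HasDerivAt (fun s : ℝ => a ^ s) (Real.log a) 0 := by
  simpa using (Real.hasStrictDerivAt_const_rpow ha 0).hasDerivAt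

lemma hasDerivAt_momentExcess_zero (M : ℕ) {q : ℕ} (hq : q ≠ 0) :
    HasDerivAt (fun s => momentExcess M s q)
      (Real.log (1 + (q : ℝ)⁻¹) - Real.log (1 + (M + 1 : ℝ)⁻¹)) 0 := by
  have hq0 : (0 : ℝ) < q := by positivity
  refine ((hasDerivAt_const_rpow_zero (by positivity)).sub
    (hasDerivAt_const_rpow_zero (by positivity))).congr_deriv ?_
  rw [Real.log_mul (by positivity) hq0.ne', show 1 + (q : ℝ)⁻¹ = (1 + q) / q by field,
    Real.log_div (by positivity) hq0.ne']
  ring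

lemma eventually_nhdsGT_lt_of_hasDerivAt_lt {f g : ℝ → ℝ} {f' g' x : ℝ} (hf : HasDerivAt f f' x)
    (hg : HasDerivAt g g' x) (hfg : f x = g x) (h : f' < g') : ∀ᶠ y in 𝓝[>] x, f y < g y := by
  have hslope := ((hasDerivAt_iff_tendsto_slope.1 (hg.sub hf)).eventually_const_lt
    (sub_pos.2 h)).filter_mono (nhdsWithin_mono x fun _ => ne_of_gt)
  filter_upwards [hslope, self_mem_nhdsWithin] with y hy hxy
  rw [slope_def_field, div_pos_iff_of_pos_right (sub_pos.2 hxy)] at hy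
  simpa [hfg] using hy

/-- Both sides of the inequality for `s` agree at `s = 0`; the assumption compares their
derivatives there. -/
lemma exists_moment_exponent
    (h : Real.log (1 + (M + 1 : ℝ)⁻¹) + Real.exp (-1) * ∑ q ∈ Icc 1 M,
      (Real.log (1 + (q : ℝ)⁻¹) - Real.log (1 + (M + 1 : ℝ)⁻¹)) * U q < lam) :
    ∃ s ∈ Set.Ioo (0 : ℝ) 1, (1 + (M + 1 : ℝ)⁻¹) ^ s +
      Real.exp (-1) * ∑ q ∈ Icc 1 M, momentExcess M s q * U q ≤ Real.exp (lam * s) := by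
  have hleft : HasDerivAt (fun s => (1 + (M + 1 : ℝ)⁻¹) ^ s +
      Real.exp (-1) * ∑ q ∈ Icc 1 M, momentExcess M s q * U q) _ 0 :=
    (hasDerivAt_const_rpow_zero (by positivity)).add ((HasDerivAt.fun_sum fun q hq =>
      (hasDerivAt_momentExcess_zero M (by grind)).mul_const (U q)).const_mul _)
  have hright : HasDerivAt (fun s => Real.exp (lam * s)) lam 0 := by
    simpa using ((hasDerivAt_id (0 : ℝ)).const_mul lam).exp
  obtain ⟨s, hs, hs01⟩ := ((eventually_nhdsGT_lt_of_hasDerivAt_lt hleft hright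
    (by simp [momentExcess]) h).and (Ioo_mem_nhdsGT one_pos)).exists
  exact ⟨s, hs01, hs.le⟩

end Moments

/-! ### Trees as rooted forests -/

section Trees

open Finset Relation

variable {V : Type*} {p q : V → Option V}

/-- The graph whose edges join each vertex to its parent. -/
def parentGraph (p : V → Option V) : SimpleGraph V :=
  SimpleGraph.fromRel fun v w => p v = some w

lemma parentGraph_adj (hp : IsForest p) {v w : V} :
    (parentGraph p).Adj v w ↔ p v = some w ∨ p w = some v := by
  obtain ⟨rank, hrank⟩ := hp
  rw [parentGraph, SimpleGraph.fromRel_adj, and_iff_right_iff_imp]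
  rintro h rfl
  exact lt_irrefl _ (hrank _ _ (or_self_iff.1 h))

lemma DescendsFrom.reachable (hp : IsForest p) {v w : V} (h : DescendsFrom p v w) :
    (parentGraph p).Reachable v w :=
  (SimpleGraph.reachable_iff_reflTransGen v w).2 <|
    ReflTransGen.mono (fun _ _ hparent => (parentGraph_adj hp).2 (.inl hparent)) _ _ h

lemma parentGraph_connected (hp : IsForest p) {r : V} (hr : ∀ v, p v = none → v = r) :
    (parentGraph p).Connected := by
  have reachable_root : ∀ v, (parentGraph p).Reachable v r := fun v => by
    obtain ⟨s, hvs, hs⟩ := hp.exists_root v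
    exact hr s hs ▸ hvs.reachable hp
  exact { preconnected := fun v w => (reachable_root v).trans (reachable_root w).symm
          nonempty := ⟨r⟩ }

lemma exists_adj_dist_lt {G : SimpleGraph V} (hG : G.Connected) {v r : V} (hvr : v ≠ r) :
    ∃ w, G.Adj v w ∧ G.dist w r < G.dist v r := by
  obtain ⟨walk, hwalk⟩ := hG.exists_walk_length_eq_dist v r
  cases walk with
  | nil => exact absurd rfl hvr
  | cons hadj tail =>
    refine ⟨_, hadj, ?_⟩
    rw [← hwalk, SimpleGraph.Walk.length_cons]
    exact Nat.lt_succ_of_le (SimpleGraph.dist_le tail)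

-- Orient every edge towards a chosen vertex; a tree is minimal among connected graphs.
lemma exists_parentGraph_eq {G : SimpleGraph V} (hG : G.IsTree) :
    ∃ p, IsForest p ∧ parentGraph p = G := by
  classical
  obtain ⟨r⟩ := hG.connected.nonempty
  choose! parent hadj hdist using fun v (hv : v ≠ r) => exists_adj_dist_lt hG.connected hv
  let p : V → Option V := fun v => if v = r then none else some (parent v)
  have parent_spec : ∀ v w, p v = some w → v ≠ r ∧ parent v = w := fun v w h => by
    simpa [p] using h
  have hp : IsForest p := by
    refine ⟨fun v => G.dist v r, fun v w h => ?_⟩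
    obtain ⟨hv, rfl⟩ := parent_spec v w h
    exact hdist v hv
  have p_le : parentGraph p ≤ G := by
    intro v w h
    rcases (parentGraph_adj hp).1 h with h | h
    · obtain ⟨hv, rfl⟩ := parent_spec v w h
      exact hadj v hv
    · obtain ⟨hw, rfl⟩ := parent_spec w v h
      exact (hadj w hw).symm
  refine ⟨p, hp, ?_⟩
  have connected : (parentGraph p).Connected :=
    parentGraph_connected hp (r := r) fun v hv => by simpa [p] using hv
  exact le_antisymm p_le
    ((SimpleGraph.isTree_iff_minimal_connected.1 hG).2 connected p_le)

-- A walk that stays in `S` can leave the descendants of `w` only through the edge above `w`.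
lemma descendsFrom_of_connected (hp : IsForest p) {S : Set V}
    (hS : ((parentGraph p).induce S).Connected) {u w : V} (hu : u ∈ S)
    (huw : DescendsFrom p u w) (hw : w ∈ S → ∀ z ∈ S, p w ≠ some z) {v : V} (hv : v ∈ S) :
    DescendsFrom p v w := by
  have h := (SimpleGraph.reachable_iff_reflTransGen _ _).1 (hS.preconnected ⟨u, hu⟩ ⟨v, hv⟩)
  suffices ∀ x : S, ReflTransGen ((parentGraph p).induce S).Adj ⟨u, hu⟩ x → DescendsFrom p x w from
    this _ h
  intro x hx
  induction hx with
  | refl => exact huw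
  | @tail x y _ hxy ih =>
    rcases (parentGraph_adj hp).1 hxy with h | h
    · exact ih.of_parent h fun hxw => hw (hxw ▸ x.2) y y.2 (hxw ▸ h)
    · exact ReflTransGen.head h ih

lemma exists_top_of_connected (hp : IsForest p) {S : Set V}
    (hS : ((parentGraph p).induce S).Connected) :
    ∃ t ∈ S, ∀ v ∈ S, DescendsFrom p v t := by
  have ⟨rank, hrank⟩ := hp
  obtain ⟨⟨u, hu⟩⟩ := hS.nonempty
  have hne : (rank '' S).Nonempty := ⟨rank u, u, hu, rfl⟩
  obtain ⟨t, ht, hmin⟩ := Nat.sInf_mem hne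
  refine ⟨t, ht, fun v => descendsFrom_of_connected hp hS ht ReflTransGen.refl fun _ z hz h => ?_⟩
  exact (hrank t z h).not_ge (hmin.trans_le (Nat.sInf_le ⟨z, hz, rfl⟩))

variable [Fintype V]

open scoped Classical in
/-- The smallest closed set containing `S`. -/
noncomputable def ancestors (p : V → Option V) (S : Set V) : Finset V :=
  {w | ∃ u ∈ S, DescendsFrom p u w}

lemma mem_ancestors {S : Set V} {w : V} :
    w ∈ ancestors p S ↔ ∃ u ∈ S, DescendsFrom p u w := by
  simp [ancestors]

lemma ancestors_mem_closedSets (S : Set V) : ancestors p S ∈ closedSets p univ := by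
  refine mem_closedSets.2 ⟨subset_univ _, fun v w hv hvw => ?_⟩
  obtain ⟨u, hu, huv⟩ := mem_ancestors.1 hv
  exact mem_ancestors.2 ⟨u, hu, ReflTransGen.tail huv hvw⟩

lemma mem_iff_mem_ancestors_and_descendsFrom_top (hp : IsForest p) {S : Set V}
    (hS : ((parentGraph p).induce S).Connected) {t : V} (ht : t ∈ S)
    (htop : ∀ v ∈ S, DescendsFrom p v t) {w : V} :
    w ∈ S ↔ w ∈ ancestors p S ∧ DescendsFrom p w t := by
  refine ⟨fun hw => ⟨mem_ancestors.2 ⟨w, hw, ReflTransGen.refl⟩, htop w hw⟩, ?_⟩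
  rintro ⟨hwS, hwt⟩
  obtain ⟨u, hu, huw⟩ := mem_ancestors.1 hwS
  by_contra hw
  have htw : DescendsFrom p t w :=
    descendsFrom_of_connected hp hS hu huw (fun h => absurd h hw) ht
  exact hw (htw.antisymm hp hwt ▸ ht)

-- A subtree is determined by its top vertex and the closed set that it generates.
lemma card_connected_le (hp : IsForest p) :
    Nat.card {S : Set V // ((parentGraph p).induce S).Connected} ≤
      Fintype.card V * #(closedSets p univ) := by
  choose top top_mem descendsFrom_top using
    fun S : {S : Set V // ((parentGraph p).induce S).Connected} => exists_top_of_connected hp S.2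
  let code : {S : Set V // ((parentGraph p).induce S).Connected} →
      V × {D // D ∈ closedSets p univ} :=
    fun S => (top S, ⟨ancestors p S, ancestors_mem_closedSets S.1⟩)
  have code_injective : code.Injective := by
    intro S T h
    obtain ⟨htop, hanc⟩ : top S = top T ∧ ancestors p S = ancestors p T := by simpa [code] using h
    ext w
    rw [mem_iff_mem_ancestors_and_descendsFrom_top hp S.2 (top_mem S) (descendsFrom_top S),
      mem_iff_mem_ancestors_and_descendsFrom_top hp T.2 (top_mem T) (descendsFrom_top T),
      htop, hanc]
  calc _ ≤ Nat.card (V × {D // D ∈ closedSets p univ}) :=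
        Nat.card_le_card_of_injective code code_injective
    _ = _ := by simp

end Trees

/-! ### A lower bound for the number of labelled trees -/

section TreeCount

open Finset Relation

variable {V : Type*} {p q : V → Option V}

lemma DescendsFrom.root_unique {v r s : V} (hvr : DescendsFrom p v r) (hvs : DescendsFrom p v s)
    (hr : p r = none) (hs : p s = none) : r = s := by
  induction hvr using ReflTransGen.head_induction_on with
  | refl =>
    rcases ReflTransGen.cases_head hvs with h | ⟨w, hrw, -⟩
    · exact h
    · simp [hr] at hrw
  | head hparent _ ih =>
    refine ih (hvs.of_parent hparent ?_)
    rintro rfl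
    simp [hs] at hparent

lemma exists_root_iff_of_card_eq_one [Fintype V] (hroots : #{v | p v = none} = 1) :
    ∃ r, ∀ v, p v = none ↔ v = r := by
  obtain ⟨r, hr⟩ := card_eq_one.1 hroots
  exact ⟨r, fun v => by simpa using Finset.ext_iff.1 hr v⟩

-- If two parent functions disagree at `v`, they also disagree at the parent of `v`, hence at the
-- root.
lemma eq_of_parentGraph_eq (hp : IsForest p) (hq : IsForest q)
    (hroots : ∀ v, p v = none ↔ q v = none) (h : parentGraph p = parentGraph q) : p = q := by
  have ⟨rank, hrank⟩ := hp
  funext v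
  induction hv : rank v using Nat.strong_induction_on generalizing v with
  | _ k ih =>
    cases hpv : p v with
    | none => exact ((hroots v).1 hpv).symm
    | some w =>
      have hadj : (parentGraph q).Adj v w := h ▸ (parentGraph_adj hp).2 (.inl hpv)
      rcases (parentGraph_adj hq).1 hadj with hqv | hqw
      · exact hqv.symm
      · have hpw : p w = some v := hqw ▸ ih (rank w) (hv ▸ hrank v w hpv) w rfl
        exact absurd (hrank v w hpv) (hrank w v hpw).asymm

lemma card_edgeSet_parentGraph_le [Fintype V] (hp : IsForest p) :
    Nat.card (parentGraph p).edgeSet ≤ #{v | p v ≠ none} := by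
  classical
  have edges_subset : (parentGraph p).edgeSet ⊆
      (({v | p v ≠ none} : Finset V).image fun v => s(v, (p v).getD v) : Finset (Sym2 V)) := by
    rintro ⟨v, w⟩ h
    rw [coe_image]
    rcases (parentGraph_adj hp).1 h with h | h
    · exact ⟨v, by simp [h], by simp [h]⟩
    · exact ⟨w, by simp [h], by simp [h, Sym2.eq_swap]⟩
  exact (Nat.card_mono (finite_toSet _) edges_subset).trans
    (by simpa only [Nat.card_coe_set_eq, Set.ncard_coe_finset] using card_image_le)

variable [DecidableEq V]

lemma IsForest.update (hp : IsForest p) {u v : V} (huv : ¬ DescendsFrom p u v) :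
    IsForest (Function.update p v (some u)) := by
  classical
  obtain ⟨rank, hrank⟩ := hp
  refine ⟨fun w => rank w + if DescendsFrom p w v then rank u + 1 else 0, fun w z h => ?_⟩
  by_cases hw : w = v
  · subst hw
    obtain rfl : u = z := by simpa using h
    simp only [huv, show DescendsFrom p w w from ReflTransGen.refl, if_true, if_false]
    omega
  · rw [Function.update_of_ne hw] at h
    have descends_iff : DescendsFrom p w v ↔ DescendsFrom p z v :=
      ⟨fun hwv => hwv.of_parent h hw, ReflTransGen.head h⟩
    simpa only [descends_iff, add_lt_add_iff_right] using hrank w z h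

variable [Fintype V]

variable (V) in
open scoped Classical in
/-- The rooted forests on `V` with `k` edges. -/
noncomputable def edgeForests (k : ℕ) : Finset (V → Option V) :=
  {p | IsForest p ∧ #{v | p v ≠ none} = k}

lemma mem_edgeForests {k : ℕ} :
    p ∈ edgeForests V k ↔ IsForest p ∧ #{v | p v ≠ none} = k := by
  simp [edgeForests]

lemma card_roots {k : ℕ} (hp : p ∈ edgeForests V k) : #{v | p v = none} = Fintype.card V - k := by
  have := card_filter_add_card_filter_not (s := (univ : Finset V)) (fun v => p v = none)
  rw [(mem_edgeForests.1 hp).2, card_univ] at this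
  omega

lemma update_mem_edgeForests {k : ℕ} (hp : p ∈ edgeForests V k) {u v : V} (hv : p v = none)
    (huv : ¬ DescendsFrom p u v) : Function.update p v (some u) ∈ edgeForests V (k + 1) := by
  obtain ⟨hforest, hcard⟩ := mem_edgeForests.1 hp
  refine mem_edgeForests.2 ⟨hforest.update huv, ?_⟩
  have : ({w | Function.update p v (some u) w ≠ none} : Finset V) =
      insert v ({w | p w ≠ none} : Finset V) := by
    ext w
    by_cases hw : w = v
    · subst hw; simp
    · simp [hw]
  rw [this, card_insert_of_notMem (by simp [hv]), hcard]

open scoped Classical in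
-- The child may be any root other than the root of the tree containing `u`.
lemma le_card_attachments {k : ℕ} (hp : p ∈ edgeForests V k) :
    Fintype.card V * (Fintype.card V - 1 - k) ≤
      #{x : V × V | p x.2 = none ∧ ¬ DescendsFrom p x.1 x.2} := by
  have le_card_fiber : ∀ u, Fintype.card V - 1 - k ≤
      #{v | p v = none ∧ ¬ DescendsFrom p u v} := fun u => by
    obtain ⟨r, hur, hr⟩ := (mem_edgeForests.1 hp).1.exists_root u
    calc Fintype.card V - 1 - k = #(({v | p v = none} : Finset V).erase r) := by
          rw [card_erase_of_mem (by simpa using hr), card_roots hp, Nat.sub_right_comm]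
      _ ≤ _ := by
          refine card_le_card fun v => ?_
          simp only [mem_erase, Finset.mem_filter, mem_univ, true_and]
          exact fun ⟨hvr, hv⟩ => ⟨hv, fun huv => hvr (huv.root_unique hur hv hr)⟩
  calc Fintype.card V * (Fintype.card V - 1 - k)
      ≤ ∑ u, #{v | p v = none ∧ ¬ DescendsFrom p u v} := by
        simpa using card_nsmul_le_sum univ _ _ fun u _ => le_card_fiber u
    _ = _ := by
        simp only [card_filter, ← univ_product_univ, sum_product]

open scoped Classical in
lemma update_injOn_attachments :
    Set.InjOn (fun x : V × V => Function.update p x.2 (some x.1))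
      ({x : V × V | p x.2 = none ∧ ¬ DescendsFrom p x.1 x.2} : Finset (V × V)) := by
  rintro ⟨u, v⟩ hx ⟨u', v'⟩ - h
  have hv : p v = none := by simp_all
  have h_at := congrFun h v
  by_cases hvv : v = v'
  · subst hvv
    simpa using h_at
  · simp [hvv, hv] at h_at

-- Pitman's double counting of the pairs formed by a rooted forest with `k + 1` edges and one of
-- its edges: removing the edge leaves a forest with `k` edges.
lemma card_edgeForests_mul_le (k : ℕ) :
    #(edgeForests V k) * (Fintype.card V * (Fintype.card V - 1 - k)) ≤
      #(edgeForests V (k + 1)) * (k + 1) := by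
  classical
  let Extends (p q : V → Option V) : Prop :=
    ∃ u v, p v = none ∧ ¬ DescendsFrom p u v ∧ q = Function.update p v (some u)
  refine card_mul_le_card_mul Extends (fun p hp => (le_card_attachments hp).trans ?_)
    fun q hq => ?_
  · rw [← card_image_of_injOn update_injOn_attachments]
    refine card_le_card fun q hq => ?_
    obtain ⟨⟨u, v⟩, hx, rfl⟩ := Finset.mem_image.1 hq
    obtain ⟨hv, huv⟩ : p v = none ∧ ¬ DescendsFrom p u v := by simpa using hx
    exact (mem_bipartiteAbove _).2 ⟨update_mem_edgeForests hp hv huv, u, v, hv, huv, rfl⟩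
  · rw [← (mem_edgeForests.1 hq).2]
    refine (card_le_card fun p hp => ?_).trans
      (card_image_le (f := fun v => Function.update q v none))
    obtain ⟨-, u, v, hv, -, rfl⟩ := (mem_bipartiteBelow _).1 hp
    refine Finset.mem_image.2 ⟨v, by simp, ?_⟩
    rw [Function.update_idem, ← hv, Function.update_eq_self]

lemma le_card_edgeForests_mul_factorial (k : ℕ) :
    Fintype.card V ^ k * (Fintype.card V - 1).descFactorial k ≤ #(edgeForests V k) * k ! := by
  induction k with
  | zero =>
    have : (fun _ => none) ∈ edgeForests V 0 := mem_edgeForests.2 ⟨⟨fun _ => 0, by simp⟩, by simp⟩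
    simpa using card_pos.2 ⟨_, this⟩
  | succ k ih =>
    set n := Fintype.card V
    calc n ^ (k + 1) * (n - 1).descFactorial (k + 1)
        = (n ^ k * (n - 1).descFactorial k) * (n * (n - 1 - k)) := by
          rw [Nat.descFactorial_succ]; ring
      _ ≤ (#(edgeForests V k) * k !) * (n * (n - 1 - k)) := Nat.mul_le_mul_right _ ih
      _ = (#(edgeForests V k) * (n * (n - 1 - k))) * k ! := by ring
      _ ≤ (#(edgeForests V (k + 1)) * (k + 1)) * k ! :=
          Nat.mul_le_mul_right _ (card_edgeForests_mul_le k)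
      _ = #(edgeForests V (k + 1)) * (k + 1)! := by rw [Nat.factorial_succ]; ring

lemma parentGraph_isTree {n : ℕ} (hV : Fintype.card V = n + 1) (hp : p ∈ edgeForests V n) :
    (parentGraph p).IsTree := by
  obtain ⟨hforest, hcard⟩ := mem_edgeForests.1 hp
  obtain ⟨r, hr⟩ := exists_root_iff_of_card_eq_one (p := p) (by rw [card_roots hp]; omega)
  have connected := parentGraph_connected hforest fun v => (hr v).1
  refine SimpleGraph.isTree_iff_connected_and_card.2
    ⟨connected, le_antisymm ?_ connected.card_vert_le_card_edgeSet_add_one⟩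
  rw [Nat.card_eq_fintype_card (α := V), hV, ← hcard]
  exact Nat.succ_le_succ (card_edgeSet_parentGraph_le hforest)

-- In fact an equality, by Cayley's formula.
lemma pow_le_mul_card_isTree {V : Type*} [Fintype V] {n : ℕ} (hV : Fintype.card V = n + 1) :
    (n + 1) ^ n ≤ (n + 1) * Nat.card {G : SimpleGraph V // G.IsTree} := by
  classical
  have pow_le : (n + 1) ^ n ≤ #(edgeForests V n) := by
    have h := le_card_edgeForests_mul_factorial (V := V) n
    rw [hV, Nat.add_sub_cancel, Nat.descFactorial_self] at h
    exact Nat.le_of_mul_le_mul_right h n.factorial_pos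
  choose root hroot using fun p : {p // p ∈ edgeForests V n} =>
    exists_root_iff_of_card_eq_one (p := p.1) (by rw [card_roots p.2]; omega)
  let code : {p // p ∈ edgeForests V n} → V × {G : SimpleGraph V // G.IsTree} :=
    fun p => (root p, ⟨parentGraph p.1, parentGraph_isTree hV p.2⟩)
  have code_injective : code.Injective := by
    intro p q h
    obtain ⟨hroots, hgraph⟩ : root p = root q ∧ parentGraph p.1 = parentGraph q.1 := by
      simpa [code] using h
    exact Subtype.ext <| eq_of_parentGraph_eq (mem_edgeForests.1 p.2).1 (mem_edgeForests.1 q.2).1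
      (fun v => by rw [hroot, hroot, hroots]) hgraph
  calc (n + 1) ^ n ≤ Nat.card {p // p ∈ edgeForests V n} := by simpa using pow_le
    _ ≤ Nat.card (V × {G : SimpleGraph V // G.IsTree}) :=
        Nat.card_le_card_of_injective code code_injective
    _ = _ := by rw [Nat.card_prod, Nat.card_eq_fintype_card (α := V), hV]

end TreeCount

/-! ### Markov's inequality on the random labelled tree -/

section RandomTree

open Finset

open scoped Classical in
/-- The labelled trees on `n` vertices, as a finite set. -/
noncomputable def labelledTrees (n : ℕ) : Finset (SimpleGraph (Fin n)) :=
  {G | G.IsTree}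

lemma mem_labelledTrees {n : ℕ} {G : SimpleGraph (Fin n)} :
    G ∈ labelledTrees n ↔ G.IsTree := by
  simp [labelledTrees]

lemma natCard_isTree (n : ℕ) :
    Nat.card {G : SimpleGraph (Fin n) // G.IsTree} = #(labelledTrees n) :=
  Nat.subtype_card _ fun _ => mem_labelledTrees

lemma treeProb_eq_card_div_card (n : ℕ) (P : SimpleGraph (Fin n) → Prop)
    [DecidablePred P] :
    treeProb n P = #{G ∈ labelledTrees n | P G} / (#(labelledTrees n) : ℝ) := by
  rw [treeProb, natCard_isTree, Nat.subtype_card {G ∈ labelledTrees n | P G}]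
  simp [mem_labelledTrees]

lemma pow_self_le_sq_mul_card_labelledTrees {n : ℕ} (hn : n ≠ 0) :
    n ^ n ≤ n ^ 2 * #(labelledTrees n) := by
  obtain ⟨m, rfl⟩ := Nat.exists_eq_succ_of_ne_zero hn
  calc (m + 1) ^ (m + 1) = (m + 1) * (m + 1) ^ m := pow_succ' _ _
    _ ≤ (m + 1) * ((m + 1) * #(labelledTrees (m + 1))) := by
        rw [← natCard_isTree]
        exact Nat.mul_le_mul_left _ (pow_le_mul_card_isTree (Fintype.card_fin _))
    _ = (m + 1) ^ 2 * #(labelledTrees (m + 1)) := by ring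

lemma card_labelledTrees_pos {n : ℕ} (hn : n ≠ 0) : 0 < #(labelledTrees n) :=
  Nat.pos_of_mul_pos_left <|
    (pow_pos (Nat.pos_of_ne_zero hn) n).trans_le (pow_self_le_sq_mul_card_labelledTrees hn)

lemma treeProb_add_treeProb_not {n : ℕ} (hn : n ≠ 0) (P : SimpleGraph (Fin n) → Prop) :
    treeProb n P + treeProb n (fun G => ¬ P G) = 1 := by
  classical
  have : (0 : ℝ) < #(labelledTrees n) := mod_cast card_labelledTrees_pos hn
  rw [treeProb_eq_card_div_card, treeProb_eq_card_div_card, ← add_div, div_eq_one_iff_eq this.ne']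
  exact_mod_cast card_filter_add_card_filter_not (s := labelledTrees n) P

lemma factorial_mul_exp_one_pow_le {n : ℕ} (hn : n ≠ 0) :
    (n ! : ℝ) * Real.exp 1 ^ n ≤ Real.exp 1 * √n * n ^ n := by
  have stirlingSeq_le : Stirling.stirlingSeq n ≤ Real.exp 1 / √2 := by
    obtain ⟨m, rfl⟩ := Nat.exists_eq_succ_of_ne_zero hn
    simpa only [Function.comp_apply, Nat.succ_eq_add_one, zero_add, Stirling.stirlingSeq_one] using
      Stirling.stirlingSeq'_antitone m.zero_le
  have hn0 : (0 : ℝ) < n := mod_cast Nat.pos_of_ne_zero hn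
  rw [Stirling.stirlingSeq, div_le_iff₀ (by positivity)] at stirlingSeq_le
  calc (n ! : ℝ) * Real.exp 1 ^ n
      ≤ Real.exp 1 / √2 * (√(2 * n) * (n / Real.exp 1) ^ n) * Real.exp 1 ^ n := by gcongr
    _ = Real.exp 1 * √n * n ^ n := by
        rw [Real.sqrt_mul zero_le_two, div_pow]
        field_simp

lemma sum_subtreeCount_rpow_le {s : ℝ} (hs : 0 ≤ s) (n : ℕ) :
    ∑ G ∈ labelledTrees n, (subtreeCount G : ℝ) ^ s ≤
      (n : ℝ) ^ s * (n ! * forestCoeff (fun k => (k : ℝ) ^ s) n) := by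
  classical
  choose! toForest isForest parentGraph_toForest using
    fun (G : SimpleGraph (Fin n)) (hG : G ∈ labelledTrees n) =>
      exists_parentGraph_eq (mem_labelledTrees.1 hG)
  have subtreeCount_le : ∀ G ∈ labelledTrees n,
      (subtreeCount G : ℝ) ^ s ≤ (n : ℝ) ^ s * (#(closedSets (toForest G) univ) : ℝ) ^ s := by
    intro G hG
    rw [← Real.mul_rpow (by positivity) (by positivity)]
    refine Real.rpow_le_rpow (by positivity) ?_ hs
    have h := card_connected_le (isForest G hG)
    rw [parentGraph_toForest G hG, Fintype.card_fin] at h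
    exact_mod_cast h
  have toForest_injOn : Set.InjOn toForest (labelledTrees n) := fun G hG H hH h => by
    rw [← parentGraph_toForest G hG, ← parentGraph_toForest H hH, h]
  have image_subset : (labelledTrees n).image toForest ⊆ forests univ := by
    refine image_subset_iff.2 fun G hG => mem_forests.2 ⟨isForest G hG, by simp⟩
  calc ∑ G ∈ labelledTrees n, (subtreeCount G : ℝ) ^ s
      ≤ (n : ℝ) ^ s * ∑ p ∈ (labelledTrees n).image toForest, (#(closedSets p univ) : ℝ) ^ s := by
        rw [sum_image toForest_injOn, mul_sum]
        exact sum_le_sum subtreeCount_le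
    _ ≤ (n : ℝ) ^ s * ∑ p ∈ forests univ, (#(closedSets p univ) : ℝ) ^ s := by
        gcongr
    _ = (n : ℝ) ^ s * (n ! * forestCoeff (fun k => (k : ℝ) ^ s) n) := by
        rw [sum_forests_eq_forestCoeff _ (fun k => (k : ℝ) ^ s), card_univ, Fintype.card_fin,
          smul_eq_mul]

open scoped Classical in
lemma card_lt_subtreeCount_mul_le {s C : ℝ} (hs : 0 ≤ s) (hC : 0 ≤ C) (n : ℕ) :
    #{G ∈ labelledTrees n | C ^ n < subtreeCount G} * (C ^ s) ^ n ≤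
      (n : ℝ) ^ s * (n ! * forestCoeff (fun k => (k : ℝ) ^ s) n) := by
  calc #{G ∈ labelledTrees n | C ^ n < subtreeCount G} * (C ^ s) ^ n
      ≤ ∑ G ∈ labelledTrees n with C ^ n < subtreeCount G, (subtreeCount G : ℝ) ^ s := by
        rw [← nsmul_eq_mul]
        refine card_nsmul_le_sum _ _ _ fun G hG => ?_
        rw [Real.rpow_pow_comm hC]
        exact Real.rpow_le_rpow (by positivity) (mem_filter.1 hG).2.le hs
    _ ≤ ∑ G ∈ labelledTrees n, (subtreeCount G : ℝ) ^ s :=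
        sum_le_sum_of_subset_of_nonneg (filter_subset _ _) fun _ _ _ => by positivity
    _ ≤ _ := sum_subtreeCount_rpow_le hs n

lemma treeProb_lt_subtreeCount_le {s C K a : ℝ} (hs : s ∈ Set.Ioo 0 1) (hC : 0 < C)
    (hmoment : ∀ n, forestCoeff (fun k => (k : ℝ) ^ s) n ≤ K * (Real.exp 1 * a) ^ n)
    (ha : 0 ≤ a) {n : ℕ} (hn : n ≠ 0) :
    treeProb n (fun G => C ^ n < subtreeCount G) ≤
      Real.exp 1 * K * (n ^ 4 * (a / C ^ s) ^ n) := by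
  have hmoment_nonneg (m : ℕ) : 0 ≤ forestCoeff (fun k => (k : ℝ) ^ s) m :=
    forestCoeff_nonneg (fun k => by positivity) m
  have hK : 0 ≤ K := by simpa using (hmoment_nonneg 0).trans (hmoment 0)
  have pow_self_le : (n : ℝ) ^ n ≤ n ^ 2 * #(labelledTrees n) :=
    mod_cast pow_self_le_sq_mul_card_labelledTrees hn
  have one_le : (1 : ℝ) ≤ n := mod_cast Nat.one_le_iff_ne_zero.2 hn
  have rpow_le : (n : ℝ) ^ s ≤ n := by
    simpa using Real.rpow_le_rpow_of_exponent_le one_le hs.2.le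
  have sqrt_le : √(n : ℝ) ≤ n := Real.sqrt_le_self_iff.2 (.inr one_le)
  have hpos : (0 : ℝ) < #(labelledTrees n) := mod_cast card_labelledTrees_pos hn
  rw [treeProb_eq_card_div_card, div_le_iff₀ hpos, div_pow]
  refine le_of_mul_le_mul_right ?_ (show 0 < (C ^ s) ^ n by positivity)
  calc _ ≤ (n : ℝ) ^ s * (n ! * forestCoeff (fun k => (k : ℝ) ^ s) n) :=
        card_lt_subtreeCount_mul_le hs.1.le hC.le n
    _ ≤ n * (n ! * (K * (Real.exp 1 * a) ^ n)) := by
        gcongr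
        exacts [mul_nonneg (by positivity) (hmoment_nonneg n), hmoment n]
    _ = K * n * a ^ n * (n ! * Real.exp 1 ^ n) := by ring
    _ ≤ K * n * a ^ n * (Real.exp 1 * √n * n ^ n) := by
        exact mul_le_mul_of_nonneg_left (factorial_mul_exp_one_pow_le hn) (by positivity)
    _ ≤ K * n * a ^ n * (Real.exp 1 * n * (n ^ 2 * #(labelledTrees n))) := by gcongr
    _ = _ := by field_simp

lemma tendsto_treeProb_of_forall_forestCoeff_rpow_le {s C K a : ℝ} (hs : s ∈ Set.Ioo 0 1)
    (hC : 0 < C) (ha : 0 ≤ a) (haC : a < C ^ s)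
    (hmoment : ∀ n, forestCoeff (fun k => (k : ℝ) ^ s) n ≤ K * (Real.exp 1 * a) ^ n) :
    Tendsto (fun n : ℕ => treeProb n (fun G => (subtreeCount G : ℝ) ≤ C ^ n)) atTop (𝓝 1) := by
  have error_tendsto : Tendsto
      (fun n : ℕ => 1 - Real.exp 1 * K * ((n : ℝ) ^ 4 * (a / C ^ s) ^ n)) atTop (𝓝 1) := by
    have h := tendsto_pow_const_mul_const_pow_of_lt_one 4 (r := a / C ^ s) (by positivity)
      ((div_lt_one (by positivity)).2 haC)
    simpa using (h.const_mul (Real.exp 1 * K)).const_sub 1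
  have treeProb_compl : ∀ n ≠ 0, treeProb n (fun G => (subtreeCount G : ℝ) ≤ C ^ n) +
      treeProb n (fun G => C ^ n < subtreeCount G) = 1 := fun n hn => by
    simpa only [not_le] using treeProb_add_treeProb_not hn fun G => (subtreeCount G : ℝ) ≤ C ^ n
  refine tendsto_of_tendsto_of_tendsto_of_le_of_le' error_tendsto tendsto_const_nhds ?_ ?_
  · filter_upwards [eventually_ne_atTop 0] with n hn
    linarith [treeProb_compl n hn, treeProb_lt_subtreeCount_le hs hC hmoment ha hn]
  · filter_upwards [eventually_ne_atTop 0] with n hn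
    have : 0 ≤ treeProb n (fun G => C ^ n < subtreeCount G) := by unfold treeProb; positivity
    linarith [treeProb_compl n hn]

theorem tendsto_treeProb_subtreeCount_le {M : ℕ} {U : ℕ → ℝ} {lam C : ℝ}
    (hU : ∀ q ∈ Icc 1 M, ∀ N, ∑ n ∈ range N, typeCoeff n q * Real.exp (-1) ^ n ≤ U q)
    (hlog : Real.log (1 + (M + 1 : ℝ)⁻¹) + Real.exp (-1) * ∑ q ∈ Icc 1 M,
      (Real.log (1 + (q : ℝ)⁻¹) - Real.log (1 + (M + 1 : ℝ)⁻¹)) * U q < lam)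
    (hC : Real.exp lam < C) :
    Tendsto (fun n : ℕ => treeProb n (fun G => (subtreeCount G : ℝ) ≤ C ^ n)) atTop (𝓝 1) := by
  obtain ⟨s, hs, hmoment⟩ := exists_moment_exponent hlog
  have hC0 : 0 < C := (Real.exp_pos lam).trans hC
  refine tendsto_treeProb_of_forall_forestCoeff_rpow_le hs hC0 (Real.exp_pos (lam * s)).le ?_
    fun n => (forestCoeff_rpow_le hs.1.le hU hmoment n).trans_eq (by rw [Real.exp_add])
  rw [Real.exp_mul]
  exact Real.rpow_lt_rpow (Real.exp_pos lam).le hC hs.1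

end RandomTree

/-! ### The numerical estimate -/

section Numerics

open Finset ArithmeticFunction

/-- Upper bounds for `10 ^ 9 * ∑ₙ typeCoeff n q / e ^ n`, for `q = 0, …, 250`, obtained by running
the recursion in `sum_typeCoeff_le` with upward rounding. -/
def typeTable : List ℕ := [
    0, 1000000000, 367879442, 135335284, 117454711, 43209174, 65682836, 24163366, 35502690,
    22218530, 24069508, 8854678, 25000947, 9197335, 12272716, 10362606, 12453848, 4581515,
    12010444, 4418396, 9707510, 6841350, 5774246, 2124227, 8651610, 4116266, 4897801, 3982501,
    5547906, 2040961, 6356056, 2338263, 4231921, 2755188, 2699023, 2036995, 5337671, 1963620,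
    2347813, 2108437, 3867702, 1422849, 3882233, 1428194, 2491303, 2487567, 1696585, 624139,
    3149482, 1450564, 2401103, 1503358, 2190401, 805804, 2342800, 1244472, 2252063, 1426453,
    1275591, 469264, 2816265, 1036046, 1241339, 1476847, 1729465, 1033644, 1875196, 689847,
    1164776, 715980, 1356467, 499017, 2064907, 759637, 1001831, 1120714, 1196997, 654310,
    1367494, 503073, 1489642, 1010733, 895265, 329350, 1757799, 844622, 836123, 583807, 1018030,
    374513, 1573671, 801160, 880887, 640510, 465239, 362068, 1195792, 439908, 777223, 693358,
    1168427, 429841, 921184, 338885, 832517, 845347, 607425, 223460, 1090547, 401190, 786530,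
    555096, 965761, 355284, 823461, 394721, 577980, 533869, 369032, 246465, 1192573, 477926,
    556960, 397456, 561070, 357376, 970264, 356941, 650669, 432653, 680029, 250169, 872570,
    427764, 411146, 547682, 576548, 212101, 499037, 183586, 660368, 327404, 304024, 193284,
    812952, 387257, 421919, 437820, 494508, 181920, 734007, 270027, 492721, 402601, 479590,
    277466, 696326, 256165, 279309, 211806, 579467, 264503, 610005, 224409, 386464, 417841,
    274877, 101122, 721873, 307858, 505218, 396154, 427793, 157377, 376128, 280736, 443626,
    226709, 221178, 81367, 738743, 271769, 462419, 310329, 405491, 234019, 410472, 191573,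
    230468, 322165, 319044, 117370, 488787, 179815, 227984, 302605, 412435, 151727, 476991,
    175476, 493617, 274953, 259280, 144701, 430618, 219896, 205564, 180811, 345643, 166279,
    571924, 210400, 286453, 172915, 145819, 115355, 464528, 227391, 231242, 187875, 393879,
    187038, 342050, 125834, 371598, 354234, 261018, 96024, 394427, 145102, 255495, 251783,
    280141, 103059, 349552, 155562, 184597, 135993, 180692, 66473, 484404, 178203, 263662,
    228512, 270434, 186157, 287638, 146454, 235449, 131190, 236437
]

/-- The entry of `typeTable` at `q`, rescaled to an upper bound for `∑ₙ typeCoeff n q / e ^ n`. -/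
def typeBound (q : ℕ) : ℚ := typeTable.getD q 0 / 10 ^ 9

lemma typeBound_nonneg (q : ℕ) : 0 ≤ typeBound q := by
  unfold typeBound
  positivity

lemma typeBound_one : typeBound 1 = 1 := by
  decide +kernel

set_option maxRecDepth 100000 in
lemma typeBound_recursion : ∀ q ∈ Icc 2 250, ∑ d ∈ q.divisorsAntidiagonal,
    cardFactors d.1 * (0.367879442 * typeBound (d.1 - 1) * typeBound d.2) ≤
      cardFactors q * typeBound q := by
  decide +kernel

lemma exp_neg_one_le : Real.exp (-1) ≤ 0.367879442 := by
  linarith [Real.exp_neg_one_lt_d9]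

lemma sum_typeCoeff_le_typeBound {q : ℕ} (hq : q ≤ 250) (N : ℕ) :
    ∑ n ∈ range N, typeCoeff n q * Real.exp (-1) ^ n ≤ typeBound q := by
  have supersolution : ∀ q ∈ Icc 2 250, ∑ d ∈ q.divisorsAntidiagonal,
      cardFactors d.1 * ((0.367879442 : ℝ) * typeBound (d.1 - 1) * typeBound d.2) ≤
        cardFactors q * typeBound q := fun q hq => by
    have h := (Rat.cast_le (K := ℝ)).2 (typeBound_recursion q hq)
    push_cast at h
    exact h
  calc ∑ n ∈ range N, typeCoeff n q * Real.exp (-1) ^ n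
      ≤ ∑ n ∈ range N, typeCoeff n q * 0.367879442 ^ n := by
        gcongr
        exacts [typeCoeff_nonneg _ q, exp_neg_one_le]
    _ ≤ typeBound q := sum_typeCoeff_le (U := fun q => typeBound q) (by norm_num)
        (fun q => by exact_mod_cast typeBound_nonneg q) (by simp [typeBound_one])
        supersolution N hq

/-- Five terms of `log ((1 + x) / (1 - x)) = 2 * ∑ᵢ x ^ (2 * i + 1) / (2 * i + 1)` at
`x = 1 / (2 * q + 1)`, with a geometric bound for the tail: an upper bound for `log (1 + 1 / q)`. -/
def logBound (q : ℕ) : ℚ :=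
  2 * (∑ i ∈ range 5, (2 * q + 1 : ℚ)⁻¹ ^ (2 * i + 1) / (2 * i + 1) +
    (2 * q + 1 : ℚ)⁻¹ ^ (2 * 5 + 1) / (1 - (2 * q + 1 : ℚ)⁻¹ ^ 2))

lemma log_one_add_inv_le_logBound {q : ℕ} (hq : 0 < q) :
    Real.log (1 + (q : ℝ)⁻¹) ≤ logBound q := by
  have hq' : (0 : ℝ) < q := by exact_mod_cast hq
  have lt_one : (2 * q + 1 : ℝ)⁻¹ < 1 := inv_lt_one_of_one_lt₀ (by linarith)
  have quotient_eq : (1 + (2 * q + 1 : ℝ)⁻¹) / (1 - (2 * q + 1 : ℝ)⁻¹) = 1 + (q : ℝ)⁻¹ := by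
    field_simp
    ring
  have series_bound := Real.log_div_le_sum_range_add (by positivity) lt_one 5
  rw [quotient_eq] at series_bound
  unfold logBound
  push_cast
  linarith

/-- The weights `e⁻¹ * typeBound q` bound the probability that a Poisson forest of critical
Galton–Watson trees has `q` closed sets, so this bounds the mean of `log (1 + 1 / q)`, values
`q > 250` being counted as `q = 251`. -/
lemma logBound_sum_lt : logBound 251 + 0.367879442 * ∑ q ∈ Icc 1 250,
    (logBound q - 2 / 503) * typeBound q < 0.3502 := by
  decide +kernel

lemma log_sum_lt : Real.log (1 + (250 + 1 : ℝ)⁻¹) + Real.exp (-1) * ∑ q ∈ Icc (1 : ℕ) 250,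
    (Real.log (1 + (q : ℝ)⁻¹) - Real.log (1 + (250 + 1 : ℝ)⁻¹)) * typeBound q < 0.3502 := by
  have typeBound_nonneg (q : ℕ) : (0 : ℝ) ≤ typeBound q := by exact_mod_cast typeBound_nonneg q
  have log_anti : ∀ q ∈ Icc (1 : ℕ) 250,
      Real.log (1 + (250 + 1 : ℝ)⁻¹) ≤ Real.log (1 + (q : ℝ)⁻¹) := fun q hq => by
    have hq0 : (0 : ℝ) < q := by exact_mod_cast (mem_Icc.1 hq).1
    have hq250 : (q : ℝ) ≤ 250 := by exact_mod_cast (mem_Icc.1 hq).2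
    gcongr
    linarith
  have log_lower : 2 / 503 ≤ Real.log (1 + (250 + 1 : ℝ)⁻¹) := by
    refine le_of_eq_of_le ?_ (Real.le_log_one_add_of_nonneg (by norm_num))
    norm_num
  have log_upper : Real.log (1 + (250 + 1 : ℝ)⁻¹) ≤ logBound 251 := by
    refine le_of_eq_of_le ?_ (log_one_add_inv_le_logBound (q := 251) (by norm_num))
    norm_num
  have rational_bound := (Rat.cast_lt (K := ℝ)).2 logBound_sum_lt
  push_cast at rational_bound
  calc _ ≤ (logBound 251 : ℝ) + 0.367879442 * ∑ q ∈ Icc (1 : ℕ) 250,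
        (Real.log (1 + (q : ℝ)⁻¹) - Real.log (1 + (250 + 1 : ℝ)⁻¹)) * typeBound q :=
        add_le_add log_upper (mul_le_mul_of_nonneg_right exp_neg_one_le
          (sum_nonneg fun q hq => mul_nonneg (sub_nonneg.2 (log_anti q hq)) (typeBound_nonneg q)))
    _ ≤ logBound 251 + 0.367879442 * ∑ q ∈ Icc (1 : ℕ) 250,
        ((logBound q : ℝ) - 2 / 503) * typeBound q := by
        gcongr with q hq
        exacts [typeBound_nonneg q, log_one_add_inv_le_logBound (mem_Icc.1 hq).1]
    _ < 0.3502 := rational_bound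

lemma exp_lt_1_4196 : Real.exp 0.3502 < 1.41960 := by
  refine (Real.exp_bound' (n := 8) (by norm_num) (by norm_num) (by norm_num)).trans_lt ?_
  norm_num [sum_range_succ, Nat.factorial]

end Numerics

/-- A.a.s. the number of subtrees of a uniformly random labelled tree on `n` vertices
is at most `1.41960 ^ n`. -/
theorem aas_subtree_upper_bound_141960 :
    Tendsto (fun n : ℕ =>
      treeProb n (fun G => (subtreeCount G : ℝ) ≤ (1.41960 : ℝ) ^ n))
      atTop (𝓝 1) := by
  refine tendsto_treeProb_subtreeCount_le (M := 250) (U := fun q => typeBound q) (lam := 0.3502)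
    (fun q hq => sum_typeCoeff_le_typeBound (Finset.mem_Icc.1 hq).2) ?_ exp_lt_1_4196
  exact_mod_cast log_sum_lt
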